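/- arXiv:2208.10579 — 2 statements merged into one kernel-verified Lean document; each statement's English description precedes it below -/
import Mathlib

section
/- (Transversality Homotopy Theorem) Let f : M → N be a smooth map between smooth manifolds and S ⊂ N a smooth submanifold. Then f is homotopic to a smooth map g : M → N that is transverse to S. Moreover, if f is already transverse to S at every point of a closed subset A ⊂ M, then g can be chosen with g|_A = f|_A. -/
/- Framework: embedded submanifolds of Euclidean space (Guillemin–Pollack style),
tangent spaces via velocity vectors of curves, local-straightening charts. -/

noncomputable section
open Set Function
open scoped RealInnerProductSpace

abbrev Euc (n : ℕ) : Type := EuclideanSpace ℝ (Fin n)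

/-- Velocity vectors at `x` of smooth curves through `x` contained in `S`. -/
def tangentSet {E : Type*} [NormedAddCommGroup E] [NormedSpace ℝ E] (S : Set E) (x : E) : Set E :=
  {v | ∃ γ : ℝ → E, (∀ t, γ t ∈ S) ∧ γ 0 = x ∧ HasDerivAt γ v 0}

/-- The tangent space of a subset `S` at `x`, as a linear subspace of the ambient space. -/
def tangentSpaceOf {E : Type*} [NormedAddCommGroup E] [NormedSpace ℝ E] (S : Set E) (x : E) :
    Submodule ℝ E := Submodule.span ℝ (tangentSet S x)

/-- `S` is a smooth embedded `k`-dimensional submanifold (without boundary):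
around every point there is a smooth local straightening diffeomorphism carrying `S`
onto a `k`-dimensional linear subspace. -/
def IsSubmanifoldOfDim {E : Type*} [NormedAddCommGroup E] [NormedSpace ℝ E]
    (k : ℕ) (S : Set E) : Prop :=
  ∀ x ∈ S, ∃ (U V : Set E) (φ ψ : E → E) (K : Submodule ℝ E),
    Module.finrank ℝ K = k ∧ IsOpen U ∧ IsOpen V ∧ x ∈ U ∧
    ContDiffOn ℝ (⊤ : ℕ∞) φ U ∧ ContDiffOn ℝ (⊤ : ℕ∞) ψ V ∧
    MapsTo φ U V ∧ MapsTo ψ V U ∧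
    (∀ y ∈ U, ψ (φ y) = y) ∧ (∀ z ∈ V, φ (ψ z) = z) ∧
    S ∩ U = U ∩ φ ⁻¹' (K : Set E)

/-- `f` (smooth on `M`) is transverse to the submanifold `S ⊂ N`:
whenever `f x ∈ S`, `T_{f x}S + df_x(T_xM) = T_{f x}N`. -/
def TransverseOn {a b : ℕ} (f : Euc a → Euc b) (M : Set (Euc a)) (N S : Set (Euc b)) : Prop :=
  ∀ x ∈ M, f x ∈ S →
    ∀ w ∈ tangentSpaceOf N (f x), ∃ u ∈ tangentSpaceOf S (f x),
      ∃ v ∈ tangentSpaceOf M x, w = u + fderiv ℝ f x v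

/-!
Let `r` be the nearest-point retraction of a neighbourhood of `N` onto `N`. The map `f` is perturbed
to `g = r ∘ (f + ε • (v + L))` with `v` a vector, `L` a linear map and `ε` a small function
vanishing to first order exactly on `C`; so `g` agrees with `f` to first order along `M ∩ C`, and
scaling `ε` down to `0` is a homotopy from `g` to `f`.

Because `L` is a parameter too, off `C` the whole 1-jet of the family depends submersively on
`(v, L)`, and this makes Sard's theorem unnecessary. Near a point of `S` let `S` be cut out of `N`
by a submersion `h` with values in `Q`. Transversality of `g` fails at `x` with `h (g x) = 0` iff a
unit covector on `Q` annihilates the range of `d(h ∘ g)_x` on the tangent space of `M`. With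
`q = dim Q` and `m = dim M`, these are `q + m` independent conditions on triples of a parameter, a
point of `M` and a covector in a sphere of dimension `q - 1`. So the incidence set has dimension one
less than the parameter space, and Hausdorff dimension does not increase under projection to it.
-/

open Filter
open scoped ContDiff Topology Manifold

section TangentSpace

variable {E F : Type*} [NormedAddCommGroup E] [NormedSpace ℝ E]
  [NormedAddCommGroup F] [NormedSpace ℝ F] {S T : Set E} {x v : E}

lemma mem_tangentSpaceOf_of_hasDerivAt {γ : ℝ → E} (hγ : HasDerivAt γ v 0)
    (hS : ∀ᶠ t in 𝓝 0, γ t ∈ S) : v ∈ tangentSpaceOf S (γ 0) := by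
  classical
  have h0 : γ 0 ∈ S := hS.self_of_nhds
  refine Submodule.subset_span ⟨fun t => if γ t ∈ S then γ t else γ 0, fun t => ?_, by simp, ?_⟩
  · dsimp only
    split_ifs with ht
    exacts [ht, h0]
  · refine hγ.congr_of_eventuallyEq ?_
    filter_upwards [hS] with t ht using if_pos ht

lemma tangentSpaceOf_mono (hST : S ⊆ T) : tangentSpaceOf S x ≤ tangentSpaceOf T x :=
  Submodule.span_mono fun _ ⟨γ, hγS, hγ⟩ => ⟨γ, fun t => hST (hγS t), hγ⟩

lemma apply_mem_tangentSpaceOf {B : Set F} {f : E → F} {f' : E →L[ℝ] F} (hf : HasFDerivAt f f' x)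
    (hSB : ∀ᶠ y in 𝓝[S] x, f y ∈ B) (hv : v ∈ tangentSpaceOf S x) :
    f' v ∈ tangentSpaceOf B (f x) := by
  suffices tangentSpaceOf S x ≤ (tangentSpaceOf B (f x)).comap f'.toLinearMap from this hv
  refine Submodule.span_le.2 ?_
  rintro w ⟨γ, hγS, rfl, hγ⟩
  refine mem_tangentSpaceOf_of_hasDerivAt (γ := f ∘ γ) (hf.comp_hasDerivAt 0 hγ) ?_
  exact (tendsto_nhdsWithin_iff.2 ⟨hγ.continuousAt, .of_forall hγS⟩).eventually hSB

lemma le_tangentSpaceOf_submodule {K : Submodule ℝ E} (hx : x ∈ K) : K ≤ tangentSpaceOf K x := by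
  intro v hv
  have hline : HasDerivAt (fun t : ℝ => x + t • v) v 0 := by
    simpa using ((hasDerivAt_id (0 : ℝ)).smul_const v).const_add x
  simpa using mem_tangentSpaceOf_of_hasDerivAt (S := K) hline
    (.of_forall fun t => K.add_mem hx (K.smul_mem t hv))

lemma tangentSpaceOf_submodule_le (K : Submodule ℝ E) [FiniteDimensional ℝ K] (x : E) :
    tangentSpaceOf (K : Set E) x ≤ K := by
  refine Submodule.span_le.2 ?_
  rintro _ ⟨γ, hγK, -, hγ⟩
  have hspan : Submodule.span ℝ (γ '' univ) ≤ K := by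
    rw [Submodule.span_le, image_univ]
    exact range_subset_iff.2 hγK
  have hderiv := range_deriv_subset_closure_span_image γ dense_univ ⟨0, hγ.deriv⟩
  exact (closure_minimal hspan K.closed_of_finiteDimensional) hderiv

end TangentSpace

section Straightening

variable {E : Type*} [NormedAddCommGroup E] [NormedSpace ℝ E]

/-- The partial homeomorphism `e` is a slice chart: a smooth local diffeomorphism of the ambient
space which, on its source, carries `S` to the linear subspace `K`. -/
structure IsStraightening (e : OpenPartialHomeomorph E E) (K : Submodule ℝ E) (S : Set E) :
    Prop where
  contDiffOn : ContDiffOn ℝ ∞ e e.source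
  contDiffOn_symm : ContDiffOn ℝ ∞ e.symm e.target
  mem_iff : ∀ y ∈ e.source, y ∈ S ↔ e y ∈ K

lemma IsSubmanifoldOfDim.exists_isStraightening {k : ℕ} {S : Set E} (hS : IsSubmanifoldOfDim k S)
    {x : E} (hx : x ∈ S) :
    ∃ (e : OpenPartialHomeomorph E E) (K : Submodule ℝ E),
      x ∈ e.source ∧ Module.finrank ℝ K = k ∧ IsStraightening e K S := by
  obtain ⟨U, V, φ, ψ, K, hK, hU, hV, hxU, hφ, hψ, hUV, hVU, hleft, hright, hSU⟩ := hS x hx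
  refine ⟨⟨⟨⟨φ, ψ, U, V, hUV, hVU, hleft, hright⟩, hφ.continuousOn, hψ.continuousOn⟩, hU, hV⟩, K,
    hxU, hK, hφ, hψ, fun y (hy : y ∈ U) => ?_⟩
  have hiff : y ∈ S ∩ U ↔ y ∈ U ∩ φ ⁻¹' (K : Set E) := by rw [hSU]
  simpa [hy] using hiff

namespace IsStraightening

variable {e : OpenPartialHomeomorph E E} {K : Submodule ℝ E} {S : Set E} {y : E}

lemma contDiffAt (h : IsStraightening e K S) (hy : y ∈ e.source) : ContDiffAt ℝ ∞ e y :=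
  h.contDiffOn.contDiffAt (e.open_source.mem_nhds hy)

lemma contDiffAt_symm (h : IsStraightening e K S) (hy : y ∈ e.target) : ContDiffAt ℝ ∞ e.symm y :=
  h.contDiffOn_symm.contDiffAt (e.open_target.mem_nhds hy)

lemma hasFDerivAt (h : IsStraightening e K S) (hy : y ∈ e.source) :
    HasFDerivAt e (fderiv ℝ e y) y :=
  ((h.contDiffAt hy).differentiableAt (by simp)).hasFDerivAt

lemma hasFDerivAt_symm (h : IsStraightening e K S) (hy : y ∈ e.target) :
    HasFDerivAt e.symm (fderiv ℝ e.symm y) y :=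
  ((h.contDiffAt_symm hy).differentiableAt (by simp)).hasFDerivAt

lemma fderiv_symm_comp_fderiv (h : IsStraightening e K S) (hy : y ∈ e.source) :
    fderiv ℝ e.symm (e y) ∘L fderiv ℝ e y = .id ℝ E := by
  have hcomp := (h.hasFDerivAt_symm (e.map_source hy)).comp y (h.hasFDerivAt hy)
  exact hcomp.unique <| (hasFDerivAt_id y).congr_of_eventuallyEq (e.eventually_left_inverse hy)

lemma fderiv_comp_fderiv_symm (h : IsStraightening e K S) (hy : y ∈ e.source) :
    fderiv ℝ e y ∘L fderiv ℝ e.symm (e y) = .id ℝ E := by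
  have he : HasFDerivAt e (fderiv ℝ e y) (e.symm (e y)) := by
    rw [e.left_inv hy]
    exact h.hasFDerivAt hy
  have hcomp := he.comp (e y) (h.hasFDerivAt_symm (e.map_source hy))
  exact hcomp.unique <| (hasFDerivAt_id _).congr_of_eventuallyEq
    (e.eventually_right_inverse (e.map_source hy))

lemma fderiv_symm_injective (h : IsStraightening e K S) (hy : y ∈ e.source) :
    Injective (fderiv ℝ e.symm (e y)) :=
  LeftInverse.injective fun v => DFunLike.congr_fun (h.fderiv_comp_fderiv_symm hy) v

lemma fderiv_mem (h : IsStraightening e K S) [FiniteDimensional ℝ K] (hy : y ∈ e.source) {w : E}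
    (hw : w ∈ tangentSpaceOf S y) : fderiv ℝ e y w ∈ K := by
  refine tangentSpaceOf_submodule_le K (e y) (apply_mem_tangentSpaceOf (h.hasFDerivAt hy) ?_ hw)
  filter_upwards [self_mem_nhdsWithin, nhdsWithin_le_nhds (e.open_source.mem_nhds hy)] with z hzS hz
  exact (h.mem_iff z hz).1 hzS

lemma fderiv_symm_mem_tangentSpaceOf (h : IsStraightening e K S) (hy : y ∈ e.source) (hyS : y ∈ S)
    {u : E} (hu : u ∈ K) : fderiv ℝ e.symm (e y) u ∈ tangentSpaceOf S y := by
  have htarget : e y ∈ e.target := e.map_source hy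
  have hmem : ∀ᶠ z in 𝓝[K] (e y), e.symm z ∈ S := by
    filter_upwards [self_mem_nhdsWithin,
      nhdsWithin_le_nhds (e.open_target.mem_nhds htarget)] with z hzK hz
    rwa [h.mem_iff _ (e.map_target hz), e.right_inv hz]
  have hmap := apply_mem_tangentSpaceOf (h.hasFDerivAt_symm htarget) hmem
    (le_tangentSpaceOf_submodule ((h.mem_iff y hy).1 hyS) hu)
  rwa [e.left_inv hy] at hmap

lemma tangentSpaceOf_eq_map (h : IsStraightening e K S) [FiniteDimensional ℝ K] (hy : y ∈ e.source)
    (hyS : y ∈ S) : tangentSpaceOf S y = K.map (fderiv ℝ e.symm (e y)).toLinearMap := by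
  refine le_antisymm ?_ ?_
  · exact fun w hw =>
      ⟨_, h.fderiv_mem hy hw, DFunLike.congr_fun (h.fderiv_symm_comp_fderiv hy) w⟩
  · rintro _ ⟨u, hu, rfl⟩
    exact h.fderiv_symm_mem_tangentSpaceOf hy hyS hu

lemma finrank_tangentSpaceOf (h : IsStraightening e K S) [FiniteDimensional ℝ K]
    (hy : y ∈ e.source) (hyS : y ∈ S) :
    Module.finrank ℝ (tangentSpaceOf S y) = Module.finrank ℝ K := by
  rw [h.tangentSpaceOf_eq_map hy hyS]
  exact (Submodule.equivMapOfInjective _ (h.fderiv_symm_injective hy) K).finrank_eq.symm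

end IsStraightening

lemma IsSubmanifoldOfDim.finrank_tangentSpaceOf [FiniteDimensional ℝ E] {k : ℕ}
    {S : Set E} {y : E} (hS : IsSubmanifoldOfDim k S) (hy : y ∈ S) :
    Module.finrank ℝ (tangentSpaceOf S y) = k := by
  obtain ⟨e, K, hye, hK, he⟩ := hS.exists_isStraightening hy
  rw [he.finrank_tangentSpaceOf hye hy, hK]

/-- The parametrization of a submanifold by the linear slice `K` of the straightening `e`; it is
meaningful only on `e.target`. -/
def sliceParam (e : OpenPartialHomeomorph E E) (K : Submodule ℝ E) (k : K) : E :=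
  e.symm k

namespace IsStraightening

variable {e : OpenPartialHomeomorph E E} {K : Submodule ℝ E} {S : Set E} {k : K}

lemma sliceParam_mem (h : IsStraightening e K S) (hk : (k : E) ∈ e.target) :
    sliceParam e K k ∈ S := by
  rw [sliceParam, h.mem_iff _ (e.map_target hk), e.right_inv hk]
  exact k.2

lemma contDiffAt_sliceParam (h : IsStraightening e K S) (hk : (k : E) ∈ e.target) :
    ContDiffAt ℝ ∞ (sliceParam e K) k :=
  (h.contDiffAt_symm hk).comp k K.subtypeL.contDiff.contDiffAt

lemma fderiv_sliceParam (h : IsStraightening e K S) (hk : (k : E) ∈ e.target) :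
    fderiv ℝ (sliceParam e K) k = fderiv ℝ e.symm k ∘L K.subtypeL :=
  ((h.hasFDerivAt_symm hk).comp k K.subtypeL.hasFDerivAt).fderiv

lemma fderiv_sliceParam_injective (h : IsStraightening e K S) (hk : (k : E) ∈ e.target) :
    Injective (fderiv ℝ (sliceParam e K) k) := by
  have hinj := h.fderiv_symm_injective (e.map_target hk)
  rw [e.right_inv hk] at hinj
  rw [h.fderiv_sliceParam hk]
  exact hinj.comp K.injective_subtype

lemma fderiv_sliceParam_mem_tangentSpaceOf (h : IsStraightening e K S) (hk : (k : E) ∈ e.target)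
    (v : K) : fderiv ℝ (sliceParam e K) k v ∈ tangentSpaceOf S (sliceParam e K k) := by
  have hmem := h.fderiv_symm_mem_tangentSpaceOf (e.map_target hk) (h.sliceParam_mem hk) v.2
  rw [e.right_inv hk] at hmem
  rwa [h.fderiv_sliceParam hk]

end IsStraightening

end Straightening

section HausdorffDimension

lemma finrank_strongDual (𝕜 V : Type*) [NontriviallyNormedField 𝕜] [CompleteSpace 𝕜]
    [NormedAddCommGroup V] [NormedSpace 𝕜 V] [FiniteDimensional 𝕜 V] :
    Module.finrank 𝕜 (V →L[𝕜] 𝕜) = Module.finrank 𝕜 V :=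
  (LinearMap.toContinuousLinearMap (𝕜 := 𝕜) (E := V) (F' := 𝕜)).finrank_eq.symm.trans
    Subspace.dual_finrank_eq

lemma dimH_image_le_of_forall_exists_nhdsWithin {X Y : Type*} [TopologicalSpace X]
    [SecondCountableTopology X] [EMetricSpace Y] {f : X → Y} {s : Set X} {d : ENNReal}
    (h : ∀ x ∈ s, ∃ t ∈ 𝓝[s] x, dimH (f '' t) ≤ d) : dimH (f '' s) ≤ d := by
  choose! t ht htd using h
  obtain ⟨c, hcs, hc, hsc⟩ := TopologicalSpace.countable_cover_nhdsWithin ht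
  calc dimH (f '' s) ≤ dimH (⋃ x ∈ c, f '' t x) := by
        rw [← image_iUnion₂]
        exact dimH_mono (image_mono hsc)
    _ = ⨆ x ∈ c, dimH (f '' t x) := dimH_bUnion hc _
    _ ≤ d := iSup₂_le fun x hx => htd x (hcs hx)

variable {E F : Type*} [NormedAddCommGroup E] [NormedSpace ℝ E] [FiniteDimensional ℝ E]
  [NormedAddCommGroup F] [NormedSpace ℝ F] [FiniteDimensional ℝ F]

lemma exists_nhds_dimH_inter_fiber_le {Φ : E → F} {Φ' : E →L[ℝ] F} {x : E}
    (hΦ : HasStrictFDerivAt Φ Φ' x) (hsurj : Surjective Φ') :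
    ∃ u ∈ 𝓝 x, dimH (u ∩ Φ ⁻¹' {Φ x}) ≤ Module.finrank ℝ Φ'.ker := by
  have hrange : Φ'.range = ⊤ := LinearMap.range_eq_top.2 hsurj
  let chart := hΦ.implicitToOpenPartialHomeomorph Φ Φ' hrange
  let graph : Φ'.ker → E := hΦ.implicitFunction Φ Φ' hrange (Φ x)
  obtain ⟨C, t, ht, hlip⟩ := (hΦ.to_implicitFunction hrange).exists_lipschitzOnWith
  have hchart : Tendsto (fun y => (chart y).2) (𝓝 x) (𝓝 0) := by
    have hcont := chart.continuousAt (hΦ.mem_implicitToOpenPartialHomeomorph_source hrange)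
    simpa [ContinuousAt, chart] using hcont.snd
  refine ⟨_, (hΦ.eq_implicitFunction hrange).and (hchart.eventually ht), ?_⟩
  have himage : {y | hΦ.implicitFunction Φ Φ' hrange (Φ y) (chart y).2 = y ∧ (chart y).2 ∈ t} ∩
      Φ ⁻¹' {Φ x} ⊆ graph '' t := by
    rintro y ⟨⟨hy, hyt⟩, hyx : Φ y = Φ x⟩
    exact ⟨_, hyt, by rwa [hyx] at hy⟩
  calc _ ≤ dimH (graph '' t) := dimH_mono himage
    _ ≤ dimH t := hlip.dimH_image_le
    _ ≤ dimH (univ : Set Φ'.ker) := dimH_mono (subset_univ t)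
    _ = Module.finrank ℝ Φ'.ker := Real.dimH_univ_eq_finrank _

lemma dimH_le_of_hasStrictFDerivAt_surjective {Φ : E → F} {c : F} {T : Set E} {n : ℕ}
    (hT : ∀ x ∈ T, Φ x = c)
    (hΦ : ∀ x ∈ T, ∃ Φ' : E →L[ℝ] F, HasStrictFDerivAt Φ Φ' x ∧ Surjective Φ')
    (hn : Module.finrank ℝ E ≤ Module.finrank ℝ F + n) : dimH T ≤ n := by
  rw [← image_id T]
  refine dimH_image_le_of_forall_exists_nhdsWithin fun x hx => ?_
  obtain ⟨Φ', hΦ', hsurj⟩ := hΦ x hx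
  obtain ⟨u, hu, hdim⟩ := exists_nhds_dimH_inter_fiber_le hΦ' hsurj
  refine ⟨u ∩ T, inter_mem (mem_nhdsWithin_of_mem_nhds hu) self_mem_nhdsWithin, ?_⟩
  rw [image_id]
  have hsub : u ∩ T ⊆ u ∩ Φ ⁻¹' {Φ x} :=
    inter_subset_inter_right u fun y hy => (hT y hy).trans (hT x hx).symm
  have hrank := LinearMap.finrank_range_add_finrank_ker Φ'.toLinearMap
  rw [LinearMap.range_eq_top.2 hsurj, finrank_top] at hrank
  exact (dimH_mono hsub).trans (hdim.trans (by exact_mod_cast (by omega)))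

end HausdorffDimension

section Jets

variable {P A B E Q : Type*} [NormedAddCommGroup P] [NormedSpace ℝ P]
  [NormedAddCommGroup A] [NormedSpace ℝ A] [NormedAddCommGroup B] [NormedSpace ℝ B]
  [NormedAddCommGroup E] [NormedSpace ℝ E]

section Annihilator

variable [NormedAddCommGroup Q] [InnerProductSpace ℝ Q]

/-- A zero `((y, L), l)` of this map is a point `y = 0`, a linear map `L` into `Q` and a unit
vector `l` of `Q` orthogonal to the range of `L`; so `L` occurs if and only if it is not onto. -/
def unitAnnihilator (w : (Q × (A →L[ℝ] Q)) × Q) : Q × (A →L[ℝ] ℝ) × ℝ :=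
  (w.1.1, innerSL ℝ w.2 ∘L w.1.2, ‖w.2‖ ^ 2 - 1)

lemma exists_unitAnnihilator_eq_zero [FiniteDimensional ℝ Q] {L : A →L[ℝ] Q}
    (hL : ¬ Surjective L) : ∃ l, unitAnnihilator ((0, L), l) = 0 := by
  have hperp : L.rangeᗮ ≠ ⊥ := fun h =>
    hL (LinearMap.range_eq_top.1 (Submodule.orthogonal_eq_bot_iff.1 h))
  obtain ⟨l, hl, hl0⟩ := Submodule.exists_mem_ne_zero_of_ne_bot hperp
  refine ⟨(‖l‖⁻¹ : ℝ) • l, Prod.ext rfl (Prod.ext ?_ ?_)⟩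
  · ext v
    have hlv : ⟪l, L v⟫ = 0 := by
      rw [real_inner_comm]
      exact hl _ ⟨v, rfl⟩
    simp [unitAnnihilator, hlv]
  · simp [unitAnnihilator, norm_smul, hl0]

lemma contDiff_unitAnnihilator {n : WithTop ℕ∞} :
    ContDiff ℝ n (unitAnnihilator (A := A) (Q := Q)) := by
  have hinner : ContDiff ℝ n fun w : (Q × (A →L[ℝ] Q)) × Q => innerSL ℝ w.2 :=
    (innerSL ℝ).contDiff.comp contDiff_snd
  exact contDiff_fst.fst.prodMk ((hinner.clm_comp contDiff_fst.snd).prodMk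
    ((contDiff_snd.norm_sq ℝ).sub contDiff_const))

lemma fderiv_unitAnnihilator_apply (y : Q) (L : A →L[ℝ] Q) (l dy : Q) (dL : A →L[ℝ] Q) (dl : Q) :
    fderiv ℝ unitAnnihilator ((y, L), l) ((dy, dL), dl) =
      (dy, innerSL ℝ l ∘L dL + innerSL ℝ dl ∘L L, 2 * ⟪l, dl⟫) := by
  have hfst : HasFDerivAt (fun w : (Q × (A →L[ℝ] Q)) × Q => w.1) (.fst ℝ _ _) ((y, L), l) :=
    hasFDerivAt_fst
  have hsnd : HasFDerivAt (fun w : (Q × (A →L[ℝ] Q)) × Q => w.2) (.snd ℝ _ _) ((y, L), l) :=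
    hasFDerivAt_snd
  have hinner := (innerSL ℝ (E := Q)).hasFDerivAt.comp ((y, L), l) hsnd
  have h := hfst.fst.prodMk ((hinner.clm_comp hfst.snd).prodMk (hsnd.norm_sq.sub_const 1))
  rw [HasFDerivAt.fderiv (f := unitAnnihilator) h]
  simp

lemma fderiv_unitAnnihilator_surjective {y l : Q} {L : A →L[ℝ] Q}
    (h0 : unitAnnihilator ((y, L), l) = 0) :
    Surjective (fderiv ℝ unitAnnihilator ((y, L), l)) := by
  have hl : ‖l‖ ^ 2 = 1 := sub_eq_zero.1 (congrArg (fun w => w.2.2) h0)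
  rintro ⟨z, μ, c⟩
  let dl := (c / 2) • l
  refine ⟨((z, (μ - innerSL ℝ dl ∘L L).smulRight l), dl), ?_⟩
  rw [fderiv_unitAnnihilator_apply]
  refine Prod.ext rfl (Prod.ext ?_ ?_)
  · ext v
    simp [hl]
  · simp only [dl, inner_smul_right, real_inner_self_eq_norm_sq, hl]
    ring

-- The zero set of `unitAnnihilator ∘ (J × id)` has dimension `dim P - 1`: its equations cut
-- down `dim P + dim A + dim Q` by `dim Q + dim A + 1`.
lemma dimH_setOf_not_surjective_le [FiniteDimensional ℝ P] [FiniteDimensional ℝ A]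
    [FiniteDimensional ℝ Q] {J : P × A → Q × (A →L[ℝ] Q)} {D : Set (P × A)}
    (hJ : ∀ u ∈ D, ContDiffAt ℝ 1 J u) (hJ' : ∀ u ∈ D, Surjective (fderiv ℝ J u)) :
    dimH {p | ∃ a, (p, a) ∈ D ∧ (J (p, a)).1 = 0 ∧ ¬ Surjective (J (p, a)).2} ≤
      (Module.finrank ℝ P - 1 : ℕ) := by
  let Φ : (P × A) × Q → Q × (A →L[ℝ] ℝ) × ℝ := unitAnnihilator ∘ Prod.map J id
  let T : Set ((P × A) × Q) := {t | t.1 ∈ D ∧ Φ t = 0}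
  have hT : dimH T ≤ (Module.finrank ℝ P - 1 : ℕ) := by
    refine dimH_le_of_hasStrictFDerivAt_surjective (Φ := Φ) (c := 0) (fun t ht => ht.2) ?_ ?_
    · rintro ⟨u, l⟩ ⟨hu, h0⟩
      have hJu := (hJ u hu).hasStrictFDerivAt one_ne_zero
      have hprod : HasStrictFDerivAt (Prod.map J id) ((fderiv ℝ J u).prodMap (.id ℝ Q)) (u, l) :=
        hJu.prodMap (u, l) (hasStrictFDerivAt_id l)
      have hann := (contDiff_unitAnnihilator (n := 1)).contDiffAt.hasStrictFDerivAt one_ne_zero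
        (x := Prod.map J id (u, l))
      exact ⟨_, hann.comp (u, l) hprod,
        (fderiv_unitAnnihilator_surjective h0).comp ((hJ' u hu).prodMap surjective_id)⟩
    · simp only [Module.finrank_prod, finrank_strongDual, Module.finrank_self]
      omega
  refine (dimH_mono ?_).trans
    (((LipschitzWith.prod_fst.comp LipschitzWith.prod_fst).dimH_image_le T).trans hT)
  rintro p ⟨a, ha, h0, hsurj⟩
  obtain ⟨l, hl⟩ := exists_unitAnnihilator_eq_zero hsurj
  refine ⟨((p, a), l), ⟨ha, ?_⟩, rfl⟩
  rwa [← h0] at hl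

end Annihilator

/-- The value and the derivative at `x` of the member `F p` of a family of maps. -/
def firstJet (F : P → A → E) (p : P) (x : A) : E × (A →L[ℝ] E) :=
  (F p x, fderiv ℝ (F p) x)

/-- Varying the parameter `p` alone moves the first jet of `F p` at `x` in all directions. This is
the hypothesis of parametric transversality; asking it of jets rather than of values is what makes
a dimension count sufficient, without Sard's theorem. -/
structure JetSubmersiveAt (F : P → A → E) (p : P) (x : A) : Prop where
  contDiffAt : ContDiffAt ℝ ∞ (uncurry F) (p, x)
  surjective : Surjective (fderiv ℝ (fun q => firstJet F q x) p)

lemma contDiffAt_firstJet {F : P → A → E} {p : P} {x : A}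
    (hF : ContDiffAt ℝ ∞ (uncurry F) (p, x)) : ContDiffAt ℝ ∞ (uncurry (firstJet F)) (p, x) := by
  have hF' : ContDiffAt ℝ ∞ (uncurry fun u : P × A => F u.1) ((p, x), x) :=
    ContDiffAt.comp (g := uncurry F) (f := fun w : (P × A) × A => (w.1.1, w.2)) ((p, x), x) hF
      (by fun_prop)
  exact hF.prodMk (hF'.fderiv (g := Prod.snd) contDiffAt_snd (by simp))

lemma eventually_differentiableAt_param {F : P → A → E} {p : P} {x : A}
    (hF : ContDiffAt ℝ ∞ (uncurry F) (p, x)) : ∀ᶠ q in 𝓝 p, DifferentiableAt ℝ (F q) x := by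
  have hdiff : ∀ᶠ u in 𝓝 (p, x), DifferentiableAt ℝ (uncurry F) u :=
    ((hF.of_le (by simp : (1 : WithTop ℕ∞) ≤ ∞)).eventually (by simp)).mono
      fun u hu => hu.differentiableAt one_ne_zero
  have hslice : ∀ᶠ q in 𝓝 p, DifferentiableAt ℝ (uncurry F) (q, x) :=
    (Continuous.prodMk_left x).continuousAt.eventually hdiff
  filter_upwards [hslice] with q hq
  exact DifferentiableAt.comp (g := uncurry F) (f := fun y => (q, y)) x hq (by fun_prop)

namespace JetSubmersiveAt

variable {F : P → A → E} {p : P} {x : A}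

lemma fderiv_firstJet_surjective (h : JetSubmersiveAt F p x) :
    Surjective (fderiv ℝ (uncurry (firstJet F)) (p, x)) := by
  have hjet := ((contDiffAt_firstJet h.contDiffAt).differentiableAt (by simp)).hasFDerivAt
  have hparam : HasFDerivAt (fun q => firstJet F q x)
      (fderiv ℝ (uncurry (firstJet F)) (p, x) ∘L .inl ℝ P A) p :=
    hjet.comp (f := fun q => (q, x)) p (hasFDerivAt_prodMk_left p x)
  have hsurj := h.surjective
  rw [hparam.fderiv] at hsurj
  exact Surjective.of_comp hsurj

lemma surjective_of_eventuallyEq_comp [NormedAddCommGroup Q] [NormedSpace ℝ Q]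
    {G : P → B → Q} {b : B} {Λ : E × (A →L[ℝ] E) → Q × (B →L[ℝ] Q)}
    {Λ' : E × (A →L[ℝ] E) →L[ℝ] Q × (B →L[ℝ] Q)} (h : JetSubmersiveAt F p x)
    (hG : ∀ᶠ q in 𝓝 p, firstJet G q b = Λ (firstJet F q x))
    (hΛ : HasFDerivAt Λ Λ' (firstJet F p x)) (hΛ' : Surjective Λ') :
    Surjective (fderiv ℝ (fun q => firstJet G q b) p) := by
  have hparam : DifferentiableAt ℝ (fun q => firstJet F q x) p :=
    ((contDiffAt_firstJet h.contDiffAt).differentiableAt (by simp)).comp p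
      (f := fun q => (q, x)) (by fun_prop)
  have hcomp := (hΛ.comp p hparam.hasFDerivAt).congr_of_eventuallyEq hG
  rw [hcomp.fderiv]
  exact hΛ'.comp h.surjective

lemma comp_left [NormedAddCommGroup Q] [NormedSpace ℝ Q] [FiniteDimensional ℝ Q] {θ : E → Q}
    (h : JetSubmersiveAt F p x) (hθ : ContDiffAt ℝ ∞ θ (F p x))
    (hθ' : Surjective (fderiv ℝ θ (F p x))) : JetSubmersiveAt (fun q y => θ (F q y)) p x := by
  refine ⟨ContDiffAt.comp (g := θ) (p, x) hθ h.contDiffAt, ?_⟩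
  have hθd : ∀ᶠ z in 𝓝 (F p x), DifferentiableAt ℝ θ z :=
    ((hθ.of_le (by simp : (1 : WithTop ℕ∞) ≤ ∞)).eventually (by simp)).mono
      fun z hz => hz.differentiableAt one_ne_zero
  have hFp : ContinuousAt (fun q => F q x) p :=
    ContinuousAt.comp (g := uncurry F) (f := fun q => (q, x)) h.contDiffAt.continuousAt
      (by fun_prop)
  have hjet : ∀ᶠ q in 𝓝 p, firstJet (fun q y => θ (F q y)) q x =
      (θ (firstJet F q x).1, fderiv ℝ θ (firstJet F q x).1 ∘L (firstJet F q x).2) := by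
    filter_upwards [hFp.eventually hθd, eventually_differentiableAt_param h.contDiffAt]
      with q hθq hFq using Prod.ext rfl (fderiv_comp x hθq hFq)
  have hθfst : HasFDerivAt (fun w : E × (A →L[ℝ] E) => θ w.1)
      (fderiv ℝ θ (F p x) ∘L .fst ℝ _ _) (firstJet F p x) :=
    HasFDerivAt.comp (g := θ) _ (hθ.differentiableAt (by simp)).hasFDerivAt hasFDerivAt_fst
  have hθ'fst : HasFDerivAt (fun w : E × (A →L[ℝ] E) => fderiv ℝ θ w.1)
      (fderiv ℝ (fderiv ℝ θ) (F p x) ∘L .fst ℝ _ _) (firstJet F p x) :=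
    HasFDerivAt.comp (g := fderiv ℝ θ) _
      ((hθ.fderiv_right (m := ∞) (by simp)).differentiableAt (by simp)).hasFDerivAt
      hasFDerivAt_fst
  refine h.surjective_of_eventuallyEq_comp hjet
    (hθfst.prodMk (hθ'fst.clm_comp hasFDerivAt_snd)) ?_
  obtain ⟨R, hR⟩ := ContinuousLinearMap.HasRightInverse.of_surjective_of_finiteDimensional hθ'
  rintro ⟨y, w⟩
  refine ⟨(R y, R ∘L (w - fderiv ℝ (fderiv ℝ θ) (F p x) (R y) ∘L fderiv ℝ (F p) x)),
    Prod.ext (hR y) ?_⟩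
  ext v
  simp [firstJet, hR _]

lemma comp_right [FiniteDimensional ℝ A] {X : B → A} {b : B}
    (h : JetSubmersiveAt F p (X b)) (hX : ContDiffAt ℝ ∞ X b) (hX' : Injective (fderiv ℝ X b)) :
    JetSubmersiveAt (fun q c => F q (X c)) p b := by
  have hFX : ContDiffAt ℝ ∞ (uncurry F ∘ fun u : P × B => (u.1, X u.2)) (p, b) :=
    h.contDiffAt.comp (p, b) (contDiffAt_fst.prodMk (hX.comp (p, b) contDiffAt_snd))
  let pull : E × (A →L[ℝ] E) →L[ℝ] E × (B →L[ℝ] E) :=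
    .prodMap (.id ℝ E) ((ContinuousLinearMap.compL ℝ B A E).flip (fderiv ℝ X b))
  have hjet : ∀ᶠ q in 𝓝 p, firstJet (fun q c => F q (X c)) q b = pull (firstJet F q (X b)) := by
    filter_upwards [eventually_differentiableAt_param h.contDiffAt] with q hq
    exact Prod.ext rfl (fderiv_comp b hq (hX.differentiableAt (by simp)))
  refine ⟨hFX, h.surjective_of_eventuallyEq_comp hjet pull.hasFDerivAt ?_⟩
  obtain ⟨R, hR⟩ := ContinuousLinearMap.HasLeftInverse.of_injective_of_finiteDimensional hX'
  rintro ⟨z, w⟩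
  refine ⟨(z, w ∘L R), Prod.ext rfl ?_⟩
  ext v
  simp [pull, hR v]

end JetSubmersiveAt

/-- The perturbation of `f` by the affine map `x ↦ p.1 + p.2 x`, scaled by the cutoff `ε`. -/
def affinePerturb (f : A → E) (ε : A → ℝ) (p : E × (A →L[ℝ] E)) (x : A) : E :=
  f x + ε x • (p.1 + p.2 x)

lemma contDiffAt_affinePerturb {f : A → E} {ε : A → ℝ} {p : E × (A →L[ℝ] E)} {x : A}
    (hf : ContDiffAt ℝ ∞ f x) (hε : ContDiffAt ℝ ∞ ε x) :
    ContDiffAt ℝ ∞ (uncurry (affinePerturb f ε)) (p, x) :=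
  (hf.comp (p, x) contDiffAt_snd).add <| (hε.comp (p, x) contDiffAt_snd).smul <|
    contDiffAt_fst.fst.add (contDiffAt_fst.snd.clm_apply contDiffAt_snd)

lemma fderiv_affinePerturb {f : A → E} {ε : A → ℝ} {x : A} (hf : DifferentiableAt ℝ f x)
    (hε : DifferentiableAt ℝ ε x) (p : E × (A →L[ℝ] E)) :
    fderiv ℝ (affinePerturb f ε p) x =
      fderiv ℝ f x + (ε x • p.2 + (fderiv ℝ ε x).smulRight (p.1 + p.2 x)) :=
  (hf.hasFDerivAt.add (hε.hasFDerivAt.smul (p.2.hasFDerivAt.const_add p.1))).fderiv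

lemma jetSubmersiveAt_affinePerturb {f : A → E} {ε : A → ℝ} {p : E × (A →L[ℝ] E)} {x : A}
    (hf : ContDiffAt ℝ ∞ f x) (hε : ContDiffAt ℝ ∞ ε x) (hεx : ε x ≠ 0) :
    JetSubmersiveAt (affinePerturb f ε) p x := by
  refine ⟨contDiffAt_affinePerturb hf hε, ?_⟩
  let eval : E × (A →L[ℝ] E) →L[ℝ] E :=
    .fst ℝ _ _ + (ContinuousLinearMap.apply ℝ E x) ∘L .snd ℝ _ _
  let jet' : E × (A →L[ℝ] E) →L[ℝ] E × (A →L[ℝ] E) :=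
    (ε x • eval).prod (ε x • .snd ℝ _ _ +
      (ContinuousLinearMap.smulRightL ℝ A E (fderiv ℝ ε x)) ∘L eval)
  have hjet : (fun q => firstJet (affinePerturb f ε) q x) =
      fun q => (f x, fderiv ℝ f x) + jet' q := by
    funext q
    exact Prod.ext rfl (fderiv_affinePerturb (hf.differentiableAt (by simp))
      (hε.differentiableAt (by simp)) q)
  rw [hjet, fderiv_const_add, jet'.fderiv]
  rintro ⟨z, w⟩
  let L : A →L[ℝ] E := (ε x)⁻¹ • (w - (fderiv ℝ ε x).smulRight ((ε x)⁻¹ • z))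
  have heval : eval ((ε x)⁻¹ • z - L x, L) = (ε x)⁻¹ • z := sub_add_cancel _ _
  refine ⟨((ε x)⁻¹ • z - L x, L), Prod.ext ?_ ?_⟩
  · simp [jet', heval, hεx]
  · change ε x • L + (fderiv ℝ ε x).smulRight (eval _) = w
    rw [heval, smul_inv_smul₀ hεx, sub_add_cancel]

end Jets

section ImplicitFunction

variable {E K Q : Type*} [NormedAddCommGroup E] [NormedSpace ℝ E] [CompleteSpace E]
  [NormedAddCommGroup K] [NormedSpace ℝ K] [CompleteSpace K]
  [NormedAddCommGroup Q] [NormedSpace ℝ Q] [CompleteSpace Q]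
  {Φ : E × K → Q} {κ : E → K} {z : E} {c : Q}

lemma contDiffAt_of_eventually_apply_eq {n : WithTop ℕ∞} (hn : n ≠ 0)
    (hΦ : ContDiffAt ℝ n Φ (z, κ z))
    (hinv : (fderiv ℝ Φ (z, κ z) ∘L .inr ℝ E K).IsInvertible) (hκ : ContinuousAt κ z)
    (hΦκ : ∀ᶠ w in 𝓝 z, Φ (w, κ w) = c) : ContDiffAt ℝ n κ z := by
  refine (hΦ.contDiffAt_implicitFunction hn hinv).congr_of_eventuallyEq ?_
  have hgraph : ContinuousAt (fun w => (w, κ w)) z := continuousAt_id.prodMk hκ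
  filter_upwards [hΦκ, hgraph.eventually (hΦ.eventually_apply_eq_iff_implicitFunction hn hinv)]
    with w hw hiff
  exact (hiff.1 (hw.trans hΦκ.self_of_nhds.symm)).symm

lemma eventually_contDiffAt_of_eventually_apply_eq
    (hΦ : ∀ᶠ u in 𝓝 (z, κ z), ContDiffAt ℝ ∞ Φ u)
    (hinv : (fderiv ℝ Φ (z, κ z) ∘L .inr ℝ E K).IsInvertible) (hκ : ContinuousAt κ z)
    (hΦκ : ∀ᶠ w in 𝓝 z, Φ (w, κ w) = c) : ∀ᶠ w in 𝓝 z, ContDiffAt ℝ ∞ κ w := by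
  have hΦz : ContDiffAt ℝ ∞ Φ (z, κ z) := hΦ.self_of_nhds
  have hgraph : ContinuousAt (fun w => (w, κ w)) z := continuousAt_id.prodMk hκ
  have hκcont : ∀ᶠ w in 𝓝 z, ContinuousAt κ w :=
    ((contDiffAt_of_eventually_apply_eq (by simp) hΦz hinv hκ hΦκ).of_le
      (by simp : (1 : WithTop ℕ∞) ≤ ∞)).eventually (by simp) |>.mono fun w hw => hw.continuousAt
  have hpartial : ContinuousAt (fun u => fderiv ℝ Φ u ∘L .inr ℝ E K) (z, κ z) :=
    ((hΦz.fderiv_right (m := ∞) (by simp)).continuousAt).clm_comp continuousAt_const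
  have hinvert : ∀ᶠ u in 𝓝 (z, κ z), (fderiv ℝ Φ u ∘L .inr ℝ E K).IsInvertible :=
    hpartial.eventually_mem (ContinuousLinearEquiv.isOpen.mem_nhds hinv)
  filter_upwards [hκcont, hgraph.eventually hΦ, hgraph.eventually hinvert, hΦκ.eventually_nhds]
    with w hκw hΦw hinvw hcw
  exact contDiffAt_of_eventually_apply_eq (by simp) hΦw hinvw hκw hcw

end ImplicitFunction

section NormalEquation

variable {E K : Type*} [NormedAddCommGroup E] [InnerProductSpace ℝ E]
  [NormedAddCommGroup K] [NormedSpace ℝ K] {σ : K → E} {k : K} {z : E}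

/-- The linear form `v ↦ ⟪z - σ k, dσ_k v⟫` at `u = (z, k)`. It vanishes if and only if `k` is a
critical point of the distance from `z` to the parametrized submanifold `σ`. -/
def normalForm (σ : K → E) (u : E × K) : K →L[ℝ] ℝ :=
  innerSL ℝ (u.1 - σ u.2) ∘L fderiv ℝ σ u.2

lemma normalForm_eq_zero_of_isLocalMin (hσ : DifferentiableAt ℝ σ k)
    (hmin : IsLocalMin (fun j => dist z (σ j)) k) : normalForm σ (z, k) = 0 := by
  have hmin_sq : IsLocalMin (fun j => ‖z - σ j‖ ^ 2) k := by
    filter_upwards [hmin] with j hj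
    simpa only [dist_eq_norm] using pow_le_pow_left₀ dist_nonneg hj 2
  have hderiv := hmin_sq.hasFDerivAt_eq_zero (hσ.hasFDerivAt.const_sub z).norm_sq
  rwa [ContinuousLinearMap.comp_neg, smul_neg, neg_eq_zero, ← Nat.cast_smul_eq_nsmul ℝ,
    smul_eq_zero_iff_right (by norm_num)] at hderiv

lemma contDiffAt_normalForm (hσ : ContDiffAt ℝ ∞ σ k) : ContDiffAt ℝ ∞ (normalForm σ) (z, k) := by
  have hsub : ContDiffAt ℝ ∞ (fun u : E × K => u.1 - σ u.2) (z, k) :=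
    contDiffAt_fst.sub (hσ.comp (z, k) contDiffAt_snd)
  exact ((innerSL ℝ).contDiff.contDiffAt.comp (z, k) hsub).clm_comp
    ((hσ.fderiv_right (m := ∞) (by simp)).comp (z, k) contDiffAt_snd)

lemma fderiv_normalForm_inr (hσ : ContDiffAt ℝ ∞ σ k) (v w : K) :
    (fderiv ℝ (normalForm σ) (σ k, k) ∘L .inr ℝ E K) v w =
      -⟪fderiv ℝ σ k v, fderiv ℝ σ k w⟫ := by
  have hslice : HasFDerivAt (fun j => normalForm σ (σ k, j))
      (fderiv ℝ (normalForm σ) (σ k, k) ∘L .inr ℝ E K) k :=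
    HasFDerivAt.comp (g := normalForm σ) (f := fun j => (σ k, j)) k
      ((contDiffAt_normalForm hσ).differentiableAt (by simp)).hasFDerivAt
      (hasFDerivAt_prodMk_right (σ k) k)
  have hinner := (innerSL ℝ (E := E)).hasFDerivAt.comp k
    ((hσ.differentiableAt (by simp)).hasFDerivAt.const_sub (σ k))
  have hform := hinner.clm_comp
    ((hσ.fderiv_right (m := ∞) (by simp)).differentiableAt (by simp)).hasFDerivAt
  rw [hslice.unique hform]
  simp only [Function.comp_apply, sub_self, map_zero, ContinuousLinearMap.zero_comp, zero_add,
    ContinuousLinearMap.comp_neg, neg_apply, neg_inj]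
  rfl

lemma isInvertible_fderiv_normalForm_inr [FiniteDimensional ℝ K] (hσ : ContDiffAt ℝ ∞ σ k)
    (hσ' : Injective (fderiv ℝ σ k)) :
    (fderiv ℝ (normalForm σ) (σ k, k) ∘L .inr ℝ E K).IsInvertible := by
  set B := fderiv ℝ (normalForm σ) (σ k, k) ∘L .inr ℝ E K with hB
  have hinj : Injective B := by
    refine (injective_iff_map_eq_zero B).2 fun v hv => hσ' ?_
    have hvv : ⟪fderiv ℝ σ k v, fderiv ℝ σ k v⟫ = 0 := by
      rw [← neg_eq_zero, ← fderiv_normalForm_inr hσ, ← hB, hv, zero_apply]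
    rw [inner_self_eq_zero.1 hvv, map_zero]
  exact ⟨(LinearEquiv.ofInjectiveOfFinrankEq B.toLinearMap hinj
    (finrank_strongDual ℝ K).symm).toContinuousLinearEquiv, rfl⟩

lemma eventually_contDiffAt_of_normalForm_eq_zero [FiniteDimensional ℝ E] [FiniteDimensional ℝ K]
    {κ : E → K} (hσ : ∀ᶠ j in 𝓝 (κ z), ContDiffAt ℝ ∞ σ j) (hσ' : Injective (fderiv ℝ σ (κ z)))
    (hz : σ (κ z) = z) (hκ : ContinuousAt κ z) (hnormal : ∀ᶠ w in 𝓝 z, normalForm σ (w, κ w) = 0) :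
    ∀ᶠ w in 𝓝 z, ContDiffAt ℝ ∞ κ w := by
  have := FiniteDimensional.complete ℝ E
  have := FiniteDimensional.complete ℝ K
  have hinv := isInvertible_fderiv_normalForm_inr hσ.self_of_nhds hσ'
  rw [hz] at hinv
  refine eventually_contDiffAt_of_eventually_apply_eq ?_ hinv hκ hnormal
  exact (continuousAt_snd.eventually hσ).mono fun u hu => contDiffAt_normalForm hu

end NormalEquation

section NearestPoint

section Metric

variable {X : Type*} [MetricSpace X] {N : Set X} {y z : X}

lemma eventually_exists_infDist_eq_dist {ρ : ℝ} (hρ : 0 < ρ) (hy : y ∈ N)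
    (hcomp : IsCompact (N ∩ Metric.closedBall y ρ)) :
    ∀ᶠ z in 𝓝 y, ∃ x ∈ N, Metric.infDist z N = dist z x := by
  filter_upwards [Metric.ball_mem_nhds y (half_pos hρ)] with z (hz : dist z y < ρ / 2)
  have hyball : y ∈ N ∩ Metric.closedBall y ρ := ⟨hy, Metric.mem_closedBall_self hρ.le⟩
  obtain ⟨x, hx, hxmin⟩ := hcomp.exists_infDist_eq_dist ⟨y, hyball⟩ z
  refine ⟨x, hx.1, le_antisymm (Metric.infDist_le_dist_of_mem hx.1) ?_⟩
  refine (Metric.le_infDist ⟨y, hy⟩).2 fun w hw => ?_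
  rw [← hxmin]
  by_cases hwball : w ∈ Metric.closedBall y ρ
  · exact Metric.infDist_le_dist_of_mem ⟨hw, hwball⟩
  · have hxy : Metric.infDist z (N ∩ Metric.closedBall y ρ) ≤ dist z y :=
      Metric.infDist_le_dist_of_mem hyball
    have htri := dist_triangle_left w y z
    have hfar : ρ < dist w y := not_le.1 hwball
    linarith

variable [Nonempty X]

/-- A point of `N` at minimal distance from `z`; it is meaningful only when the distance is
attained. -/
def nearestPoint (N : Set X) (z : X) : X :=
  Classical.epsilon fun y => y ∈ N ∧ Metric.infDist z N = dist z y

lemma nearestPoint_spec (h : ∃ y ∈ N, Metric.infDist z N = dist z y) :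
    nearestPoint N z ∈ N ∧ Metric.infDist z N = dist z (nearestPoint N z) :=
  Classical.epsilon_spec (p := fun y => y ∈ N ∧ Metric.infDist z N = dist z y) h

lemma nearestPoint_eq_self (hz : z ∈ N) : nearestPoint N z = z := by
  have hdist : Metric.infDist z N = dist z z := by rw [Metric.infDist_zero_of_mem hz, dist_self]
  exact (dist_eq_zero.1 ((nearestPoint_spec ⟨z, hz, hdist⟩).2.symm.trans
    (Metric.infDist_zero_of_mem hz))).symm

lemma dist_nearestPoint_le (h : ∃ y ∈ N, Metric.infDist z N = dist z y) (hy : y ∈ N) :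
    dist z (nearestPoint N z) ≤ dist z y :=
  (nearestPoint_spec h).2.symm.trans_le (Metric.infDist_le_dist_of_mem hy)

lemma continuousAt_nearestPoint (hy : y ∈ N)
    (h : ∀ᶠ z in 𝓝 y, ∃ x ∈ N, Metric.infDist z N = dist z x) :
    ContinuousAt (nearestPoint N) y := by
  rw [ContinuousAt, nearestPoint_eq_self hy, tendsto_iff_dist_tendsto_zero]
  have htwice : Tendsto (fun z => dist z y + dist z y) (𝓝 y) (𝓝 0) := by
    have hdist : Continuous fun z => dist z y + dist z y := by fun_prop
    simpa using hdist.tendsto y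
  refine squeeze_zero' (.of_forall fun z => dist_nonneg) ?_ htwice
  filter_upwards [h] with z hz
  calc dist (nearestPoint N z) y ≤ dist z (nearestPoint N z) + dist z y :=
        dist_triangle_left _ _ _
    _ ≤ dist z y + dist z y := by gcongr; exact dist_nearestPoint_le hz hy

end Metric

variable {E : Type*} [NormedAddCommGroup E] [InnerProductSpace ℝ E] {N : Set E} {y z : E}
  {e : OpenPartialHomeomorph E E} {K : Submodule ℝ E}

namespace IsStraightening

lemma normalForm_sliceParam_eq_zero (he : IsStraightening e K N) {k : K}
    (hk : (k : E) ∈ e.target) (hmin : ∀ x ∈ N, dist z (sliceParam e K k) ≤ dist z x) :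
    normalForm (sliceParam e K) (z, k) = 0 := by
  refine normalForm_eq_zero_of_isLocalMin
    ((he.contDiffAt_sliceParam hk).differentiableAt (by simp)) ?_
  filter_upwards [K.subtypeL.continuous.continuousAt.eventually_mem (e.open_target.mem_nhds hk)]
    with j hj using hmin _ (he.sliceParam_mem hj)

variable [FiniteDimensional ℝ E]

lemma exists_isCompact_inter_closedBall (he : IsStraightening e K N) (hy : y ∈ e.source) :
    ∃ ρ > 0, IsCompact (N ∩ Metric.closedBall y ρ) := by
  have := FiniteDimensional.proper ℝ E
  obtain ⟨ρ, hρ, hball⟩ := Metric.nhds_basis_closedBall.mem_iff.1 (e.open_source.mem_nhds hy)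
  have hslice : N ∩ Metric.closedBall y ρ = Metric.closedBall y ρ ∩ e ⁻¹' K := by
    ext w
    rw [inter_comm, mem_inter_iff, mem_inter_iff]
    exact and_congr_right fun hw => he.mem_iff w (hball hw)
  refine ⟨ρ, hρ, (isCompact_closedBall y ρ).of_isClosed_subset ?_ inter_subset_right⟩
  rw [hslice]
  exact (e.continuousOn.mono hball).preimage_isClosed_of_isClosed Metric.isClosed_closedBall
    K.closed_of_finiteDimensional

lemma eventually_exists_infDist_eq_dist (he : IsStraightening e K N) (hye : y ∈ e.source)
    (hy : y ∈ N) : ∀ᶠ z in 𝓝 y, ∃ x ∈ N, Metric.infDist z N = dist z x := by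
  obtain ⟨ρ, hρ, hcomp⟩ := he.exists_isCompact_inter_closedBall hye
  exact _root_.eventually_exists_infDist_eq_dist hρ hy hcomp

lemma eventually_contDiffAt_nearestPoint (he : IsStraightening e K N) (hye : y ∈ e.source)
    (hy : y ∈ N) : ∀ᶠ z in 𝓝 y, ContDiffAt ℝ ∞ (nearestPoint N) z := by
  have hex := he.eventually_exists_infDist_eq_dist hye hy
  have hnear : ContinuousAt (nearestPoint N) y := continuousAt_nearestPoint hy hex
  have hy_self : nearestPoint N y = y := nearestPoint_eq_self hy
  let κ : E → K := fun z => K.orthogonalProjectionOnto (e (nearestPoint N z))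
  have hsource : ∀ᶠ z in 𝓝 y, nearestPoint N z ∈ e.source :=
    hnear.eventually_mem (e.open_source.mem_nhds (by rwa [hy_self]))
  have hκ_coe : ∀ᶠ z in 𝓝 y, (κ z : E) = e (nearestPoint N z) := by
    filter_upwards [hex, hsource] with z hz hze
    exact K.starProjection_eq_self_iff.2 ((he.mem_iff _ hze).1 (nearestPoint_spec hz).1)
  have hκ_target : ∀ᶠ z in 𝓝 y, (κ z : E) ∈ e.target := by
    filter_upwards [hκ_coe, hsource] with z hz hze
    exact hz ▸ e.map_source hze
  have hparam : ∀ᶠ z in 𝓝 y, nearestPoint N z = sliceParam e K (κ z) := by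
    filter_upwards [hκ_coe, hsource] with z hz hze
    rw [sliceParam, hz, e.left_inv hze]
  have hnormal : ∀ᶠ z in 𝓝 y, normalForm (sliceParam e K) (z, κ z) = 0 := by
    filter_upwards [hex, hκ_target, hparam] with z hz hze hzκ
    exact he.normalForm_sliceParam_eq_zero hze fun x hx => hzκ ▸ dist_nearestPoint_le hz hx
  have hκ_cont : ContinuousAt κ y := by
    refine K.orthogonalProjectionOnto.continuous.continuousAt.comp
      (ContinuousAt.comp (g := e) ?_ hnear)
    rw [hy_self]
    exact e.continuousAt hye
  have hκ : ∀ᶠ z in 𝓝 y, ContDiffAt ℝ ∞ κ z := by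
    have hκy := hκ_target.self_of_nhds
    refine eventually_contDiffAt_of_normalForm_eq_zero ?_ (he.fderiv_sliceParam_injective hκy)
      (hparam.self_of_nhds.symm.trans hy_self) hκ_cont hnormal
    filter_upwards [K.subtypeL.continuous.continuousAt.eventually_mem
      (e.open_target.mem_nhds hκy)] with j hj using he.contDiffAt_sliceParam hj
  filter_upwards [hκ, hκ_target, hparam.eventually_nhds] with z hκz hze hzparam
  exact ((he.contDiffAt_sliceParam hze).comp z hκz).congr_of_eventuallyEq hzparam

end IsStraightening

end NearestPoint

section TubularRetraction

variable {E : Type*} [NormedAddCommGroup E] [NormedSpace ℝ E] {N : Set E} {r : E → E} {y z : E}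

/-- The smooth retraction `r` of a tubular neighbourhood `O` onto the submanifold `N`, a submersion
onto `N` in the sense that its differentials have the tangent spaces of `N` as ranges. -/
structure IsTubularRetraction (N O : Set E) (r : E → E) : Prop where
  isOpen : IsOpen O
  subset : N ⊆ O
  contDiffOn : ContDiffOn ℝ ∞ r O
  mapsTo : MapsTo r O N
  eq_self : ∀ y ∈ N, r y = y
  range_fderiv : ∀ z ∈ O, (fderiv ℝ r z).range = tangentSpaceOf N (r z)

lemma range_fderiv_le_tangentSpaceOf (hr : DifferentiableAt ℝ r z)
    (hN : ∀ᶠ w in 𝓝 z, r w ∈ N) : (fderiv ℝ r z).range ≤ tangentSpaceOf N (r z) := by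
  rintro _ ⟨v, rfl⟩
  exact apply_mem_tangentSpaceOf hr.hasFDerivAt (hN.filter_mono nhdsWithin_le_nhds)
    (le_tangentSpaceOf_submodule (K := ⊤) Submodule.mem_top Submodule.mem_top)

lemma fderiv_apply_of_mem_tangentSpaceOf (hr : DifferentiableAt ℝ r y)
    (hfix : ∀ x ∈ N, r x = x) {v : E} (hv : v ∈ tangentSpaceOf N y) : fderiv ℝ r y v = v := by
  suffices tangentSpaceOf N y ≤ LinearMap.eqLocus (fderiv ℝ r y).toLinearMap .id from this hv
  refine Submodule.span_le.2 ?_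
  rintro w ⟨γ, hγN, rfl, hγ⟩
  have hrγ : r ∘ γ = γ := funext fun t => hfix _ (hγN t)
  exact (hr.hasFDerivAt.comp_hasDerivAt 0 hγ).unique (hrγ.symm ▸ hγ)

lemma tangentSpaceOf_le_range_fderiv (hr : DifferentiableAt ℝ r y) (hfix : ∀ x ∈ N, r x = x) :
    tangentSpaceOf N y ≤ (fderiv ℝ r y).range :=
  fun v hv => ⟨v, fderiv_apply_of_mem_tangentSpaceOf hr hfix hv⟩

lemma IsSubmanifoldOfDim.eventually_range_fderiv [FiniteDimensional ℝ E] {d : ℕ}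
    (hN : IsSubmanifoldOfDim d N) (hfix : ∀ x ∈ N, r x = x) (hy : y ∈ N)
    (hr : ∀ᶠ z in 𝓝 y, ContDiffAt ℝ ∞ r z) (hrN : ∀ᶠ z in 𝓝 y, r z ∈ N) :
    ∀ᶠ z in 𝓝 y, (fderiv ℝ r z).range = tangentSpaceOf N (r z) := by
  have hrank_y : (d : Cardinal) ≤ (fderiv ℝ r y).rank := by
    rw [← hN.finrank_tangentSpaceOf hy, LinearMap.rank, Module.finrank_eq_rank]
    exact Submodule.rank_mono
      (tangentSpaceOf_le_range_fderiv (hr.self_of_nhds.differentiableAt (by simp)) hfix)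
  have hcont : ContinuousAt (fderiv ℝ r) y :=
    (hr.self_of_nhds.fderiv_right (m := ∞) (by simp)).continuousAt
  filter_upwards [hr, hrN.eventually_nhds,
    hcont.eventually_mem ((isOpen_setOfPred_nat_le_rank d).mem_nhds hrank_y)]
    with z hrz hrNz (hrank : (d : Cardinal) ≤ (fderiv ℝ r z).rank)
  refine Submodule.eq_of_le_of_finrank_le
    (range_fderiv_le_tangentSpaceOf (hrz.differentiableAt (by simp)) hrNz) ?_
  rw [LinearMap.rank, ← Module.finrank_eq_rank] at hrank
  rw [hN.finrank_tangentSpaceOf hrNz.self_of_nhds]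
  exact_mod_cast hrank

end TubularRetraction

lemma IsSubmanifoldOfDim.exists_isTubularRetraction {E : Type*} [NormedAddCommGroup E]
    [InnerProductSpace ℝ E] [FiniteDimensional ℝ E] {d : ℕ} {N : Set E}
    (hN : IsSubmanifoldOfDim d N) : ∃ O r, IsTubularRetraction N O r := by
  have hfix : ∀ x ∈ N, nearestPoint N x = x := fun x hx => nearestPoint_eq_self hx
  let O := interior {z | ContDiffAt ℝ ∞ (nearestPoint N) z ∧ nearestPoint N z ∈ N ∧
    (fderiv ℝ (nearestPoint N) z).range = tangentSpaceOf N (nearestPoint N z)}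
  refine ⟨O, nearestPoint N, isOpen_interior, fun y hy => mem_interior_iff_mem_nhds.2 ?_,
    fun z hz => (interior_subset hz).1.contDiffWithinAt, fun z hz => (interior_subset hz).2.1, hfix,
    fun z hz => (interior_subset hz).2.2⟩
  obtain ⟨e, K, hye, -, he⟩ := hN.exists_isStraightening hy
  have hsmooth := he.eventually_contDiffAt_nearestPoint hye hy
  have hmem : ∀ᶠ z in 𝓝 y, nearestPoint N z ∈ N :=
    (he.eventually_exists_infDist_eq_dist hye hy).mono fun z hz => (nearestPoint_spec hz).1
  exact hsmooth.and (hmem.and (hN.eventually_range_fderiv hfix hy hsmooth hmem))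

section LinearAlgebra

lemma inf_ker_le_of_finrank_le {𝕜 V W : Type*} [Field 𝕜] [AddCommGroup V] [Module 𝕜 V]
    [FiniteDimensional 𝕜 V] [AddCommGroup W] [Module 𝕜 W] {B : V →ₗ[𝕜] W} {R T : Submodule 𝕜 V}
    (hRT : R ≤ T) (hRB : R ≤ B.ker)
    (hdim : Module.finrank 𝕜 T ≤ Module.finrank 𝕜 R + Module.finrank 𝕜 (T.map B)) :
    T ⊓ B.ker ≤ R := by
  have hrank := (B.domRestrict T).finrank_range_add_finrank_ker
  rw [LinearMap.range_domRestrict, LinearMap.ker_domRestrict,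
    ← Submodule.finrank_map_subtype_eq T, Submodule.map_comap_subtype] at hrank
  exact (Submodule.eq_of_le_of_finrank_le (le_inf hRT hRB) (by omega)).ge

lemma eventually_surjective {X V W : Type*} [TopologicalSpace X] [NormedAddCommGroup V]
    [NormedSpace ℝ V] [NormedAddCommGroup W] [NormedSpace ℝ W] [FiniteDimensional ℝ W]
    {B : X → V →L[ℝ] W} {x : X} (hB : ContinuousAt B x) (hsurj : Surjective (B x)) :
    ∀ᶠ y in 𝓝 x, Surjective (B y) := by
  have hrank : ∀ L : V →L[ℝ] W,
      Surjective L ↔ (Module.finrank ℝ W : Cardinal) ≤ L.toLinearMap.rank := by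
    intro L
    rw [LinearMap.rank, ← Module.finrank_eq_rank, Nat.cast_le]
    refine ⟨fun h => ?_, fun h => LinearMap.range_eq_top.1 ?_⟩
    · rw [LinearMap.range_eq_top.2 h, finrank_top]
    · exact Submodule.eq_top_of_finrank_eq (le_antisymm (Submodule.finrank_le _) h)
  filter_upwards [hB.eventually_mem ((isOpen_setOfPred_nat_le_rank _).mem_nhds ((hrank _).1 hsurj))]
    with y hy using (hrank _).2 hy

end LinearAlgebra

section DefiningMap

/-- The map `h` behaves at the point `y` of `S ⊆ N` as a map cutting out `S` in `N` near `y`: it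
vanishes at `y` and its differential maps `T_y N` onto `Q` with kernel contained in `T_y S`. -/
structure IsDefiningMapAt {E Q : Type*} [NormedAddCommGroup E] [NormedSpace ℝ E]
    [NormedAddCommGroup Q] [NormedSpace ℝ Q] (h : E → Q) (N S : Set E) (y : E) : Prop where
  contDiffAt : ContDiffAt ℝ ∞ h y
  apply_eq_zero : h y = 0
  map_eq_top : (tangentSpaceOf N y).map (fderiv ℝ h y).toLinearMap = ⊤
  inf_ker_le : tangentSpaceOf N y ⊓ (fderiv ℝ h y).ker ≤ tangentSpaceOf S y

namespace IsStraightening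

variable {E Q : Type*} [NormedAddCommGroup E] [NormedSpace ℝ E] [NormedAddCommGroup Q]
  [NormedSpace ℝ Q] {e : OpenPartialHomeomorph E E} {K : Submodule ℝ E} {N : Set E} {y : E}

lemma map_tangentSpaceOf_eq_top_iff (he : IsStraightening e K N) [FiniteDimensional ℝ K]
    (hye : y ∈ e.source) (hy : y ∈ N) {B : E →L[ℝ] Q} :
    (tangentSpaceOf N y).map B.toLinearMap = ⊤ ↔
      Surjective (B ∘L fderiv ℝ e.symm (e y) ∘L K.subtypeL) := by
  have hrange : (B ∘L fderiv ℝ e.symm (e y) ∘L K.subtypeL).range =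
      (K.map (fderiv ℝ e.symm (e y)).toLinearMap).map B.toLinearMap := by
    change (B.toLinearMap ∘ₗ (fderiv ℝ e.symm (e y)).toLinearMap ∘ₗ K.subtype).range = _
    rw [LinearMap.range_comp, LinearMap.range_comp, Submodule.range_subtype]
  rw [he.tangentSpaceOf_eq_map hye hy, ← hrange]
  exact LinearMap.range_eq_top

lemma eventually_map_tangentSpaceOf_eq_top (he : IsStraightening e K N) [FiniteDimensional ℝ K]
    [FiniteDimensional ℝ Q] (hye : y ∈ e.source) (hy : y ∈ N) {B : E → E →L[ℝ] Q}
    (hB : ContinuousAt B y) (htop : (tangentSpaceOf N y).map (B y).toLinearMap = ⊤) :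
    ∀ᶠ z in 𝓝[N] y, (tangentSpaceOf N z).map (B z).toLinearMap = ⊤ := by
  have hsymm : ContinuousAt (fun z => fderiv ℝ e.symm (e z)) y :=
    ((he.contDiffAt_symm (e.map_source hye)).fderiv_right (m := ∞) (by simp)).continuousAt.comp
      (e.continuousAt hye)
  have hsurj := eventually_surjective (hB.clm_comp (hsymm.clm_comp continuousAt_const))
    ((he.map_tangentSpaceOf_eq_top_iff hye hy).1 htop)
  filter_upwards [self_mem_nhdsWithin, nhdsWithin_le_nhds (e.open_source.mem_nhds hye),
    nhdsWithin_le_nhds hsurj] with z hzN hze hz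
  exact (he.map_tangentSpaceOf_eq_top_iff hze hzN).2 hz

end IsStraightening

variable {E : Type*} [NormedAddCommGroup E] [InnerProductSpace ℝ E] [FiniteDimensional ℝ E]
  {e : OpenPartialHomeomorph E E} {K Q : Submodule ℝ E} {N S : Set E} {y : E}

lemma IsStraightening.isDefiningMapAt (he : IsStraightening e K S) (hye : y ∈ e.source)
    (hy : y ∈ S) (hSN : S ⊆ N) (hQK : Q ≤ Kᗮ)
    (hdim : Module.finrank ℝ (tangentSpaceOf N y) ≤ Module.finrank ℝ K + Module.finrank ℝ Q)
    (htop : (tangentSpaceOf N y).map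
      (Q.orthogonalProjectionOnto ∘L fderiv ℝ e y).toLinearMap = ⊤) :
    IsDefiningMapAt (fun z => Q.orthogonalProjectionOnto (e z)) N S y := by
  have hfderiv : fderiv ℝ (fun z => Q.orthogonalProjectionOnto (e z)) y =
      Q.orthogonalProjectionOnto ∘L fderiv ℝ e y :=
    (Q.orthogonalProjectionOnto.hasFDerivAt.comp y (he.hasFDerivAt hye)).fderiv
  have hproj : ∀ k ∈ K, Q.orthogonalProjectionOnto k = 0 := fun k hk =>
    Submodule.orthogonalProjectionOnto_eq_zero_iff.2
      (Submodule.orthogonal_le hQK (Submodule.le_orthogonal_orthogonal K hk))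
  refine ⟨Q.orthogonalProjectionOnto.contDiff.contDiffAt.comp y (he.contDiffAt hye),
    hproj _ ((he.mem_iff y hye).1 hy), by rwa [hfderiv], ?_⟩
  rw [hfderiv]
  refine inf_ker_le_of_finrank_le (tangentSpaceOf_mono hSN)
    (fun v hv => hproj _ (he.fderiv_mem hye hv)) ?_
  rwa [he.finrank_tangentSpaceOf hye hy, htop, finrank_top]

lemma IsSubmanifoldOfDim.exists_isDefiningMapAt {d s : ℕ} (hN : IsSubmanifoldOfDim d N)
    (hS : IsSubmanifoldOfDim s S) (hSN : S ⊆ N) (hy : y ∈ S) :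
    ∃ (Q : Submodule ℝ E) (h : E → Q), ∀ᶠ z in 𝓝[S] y, IsDefiningMapAt h N S z := by
  obtain ⟨e, K, hye, -, he⟩ := hS.exists_isStraightening hy
  obtain ⟨eN, KN, hyeN, -, heN⟩ := hN.exists_isStraightening (hSN hy)
  let T : Submodule ℝ E := (tangentSpaceOf N y).map (fderiv ℝ e y).toLinearMap
  let Q : Submodule ℝ E := Kᗮ ⊓ T
  have hKT : K ≤ T := fun k hk =>
    ⟨_, tangentSpaceOf_mono hSN (he.fderiv_symm_mem_tangentSpaceOf hye hy hk),
      DFunLike.congr_fun (he.fderiv_comp_fderiv_symm hye) k⟩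
  have hdim : d ≤ Module.finrank ℝ K + Module.finrank ℝ Q := by
    have hinj : Injective (fderiv ℝ e y) :=
      LeftInverse.injective fun v => DFunLike.congr_fun (he.fderiv_symm_comp_fderiv hye) v
    rw [Submodule.finrank_add_inf_finrank_orthogonal hKT, ← hN.finrank_tangentSpaceOf (hSN hy)]
    exact (Submodule.equivMapOfInjective _ hinj _).finrank_eq.le
  have htop : (tangentSpaceOf N y).map
      (Q.orthogonalProjectionOnto ∘L fderiv ℝ e y).toLinearMap = ⊤ := by
    refine Submodule.eq_top_iff'.2 fun q => ?_
    obtain ⟨w, hw, hwq : fderiv ℝ e y w = q⟩ := q.2.2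
    exact ⟨w, hw, (congrArg _ hwq).trans
      (Submodule.orthogonalProjectionOnto_mem_subspace_eq_self q)⟩
  have hcont : ContinuousAt (fun z => Q.orthogonalProjectionOnto ∘L fderiv ℝ e z) y :=
    continuousAt_const.clm_comp
      ((he.contDiffAt hye).fderiv_right (m := ∞) (by simp)).continuousAt
  have hev := heN.eventually_map_tangentSpaceOf_eq_top hyeN (hSN hy) hcont htop
  refine ⟨Q, fun z => Q.orthogonalProjectionOnto (e z), ?_⟩
  filter_upwards [self_mem_nhdsWithin, nhdsWithin_le_nhds (e.open_source.mem_nhds hye),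
    nhdsWithin_mono y hSN hev] with z hzS hze hz
  refine he.isDefiningMapAt hze hzS hSN inf_le_left ?_ hz
  rwa [hN.finrank_tangentSpaceOf (hSN hzS)]

end DefiningMap

section ParametricTransversality

variable {P A E Q : Type*} [NormedAddCommGroup P] [NormedSpace ℝ P]
  [NormedAddCommGroup A] [NormedSpace ℝ A] [NormedAddCommGroup Q] [NormedSpace ℝ Q]

section Pointwise

variable [NormedAddCommGroup E] [NormedSpace ℝ E] {M : Set A} {N S O : Set E} {r : E → E}

/-- Transversality at the point `x` of the map `f : M → N` to the submanifold `S ⊆ N`: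
if `f x ∈ S` then `T_{f x} S + df_x(T_x M)` exhausts `T_{f x} N`. -/
def TransverseAt (f : A → E) (M : Set A) (N S : Set E) (x : A) : Prop :=
  f x ∈ S → ∀ w ∈ tangentSpaceOf N (f x), ∃ u ∈ tangentSpaceOf S (f x),
    ∃ v ∈ tangentSpaceOf M x, w = u + fderiv ℝ f x v

lemma IsDefiningMapAt.transverseAt {h : E → Q} {g : A → E} {x : A}
    (hh : IsDefiningMapAt h N S (g x)) (hg : DifferentiableAt ℝ g x)
    (hgN : ∀ᶠ y in 𝓝[M] x, g y ∈ N)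
    (hsurj : ∀ q, ∃ v ∈ tangentSpaceOf M x, fderiv ℝ (fun y => h (g y)) x v = q) :
    TransverseAt g M N S x := by
  intro _ w hw
  obtain ⟨v, hv, hvw⟩ := hsurj (fderiv ℝ h (g x) w)
  rw [fderiv_fun_comp x (hh.contDiffAt.differentiableAt (by simp)) hg] at hvw
  refine ⟨w - fderiv ℝ g x v, hh.inf_ker_le ⟨?_, ?_⟩, v, hv, (sub_add_cancel _ _).symm⟩
  · exact sub_mem hw (apply_mem_tangentSpaceOf hg.hasFDerivAt hgN hv)
  · exact (map_sub (fderiv ℝ h (g x)) _ _).trans (sub_eq_zero.2 hvw.symm)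

lemma IsDefiningMapAt.transverseAt_sliceParam {e : OpenPartialHomeomorph A A} {K : Submodule ℝ A}
    {k : K} {h : E → Q} {g : A → E} (hh : IsDefiningMapAt h N S (g (sliceParam e K k)))
    (he : IsStraightening e K M) (hk : (k : A) ∈ e.target)
    (hg : DifferentiableAt ℝ g (sliceParam e K k)) (hgN : ∀ᶠ y in 𝓝[M] sliceParam e K k, g y ∈ N)
    (hsurj : Surjective (fderiv ℝ (fun j => h (g (sliceParam e K j))) k)) :
    TransverseAt g M N S (sliceParam e K k) := by
  refine hh.transverseAt hg hgN fun q => ?_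
  obtain ⟨v, hv⟩ := hsurj q
  refine ⟨_, he.fderiv_sliceParam_mem_tangentSpaceOf hk v, ?_⟩
  have hhg : DifferentiableAt ℝ (fun y => h (g y)) (sliceParam e K k) :=
    (hh.contDiffAt.differentiableAt (by simp)).comp _ hg
  rw [← hv, fderiv_fun_comp k hhg ((he.contDiffAt_sliceParam hk).differentiableAt (by simp))]
  rfl

namespace IsTubularRetraction

lemma contDiffAt (hr : IsTubularRetraction N O r) {z : E} (hz : z ∈ O) : ContDiffAt ℝ ∞ r z :=
  hr.contDiffOn.contDiffAt (hr.isOpen.mem_nhds hz)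

lemma fderiv_comp_surjective (hr : IsTubularRetraction N O r) {h : E → Q} {z : E} (hz : z ∈ O)
    (hh : IsDefiningMapAt h N S (r z)) : Surjective (fderiv ℝ (fun w => h (r w)) z) := by
  rw [fderiv_fun_comp z (hh.contDiffAt.differentiableAt (by simp))
    ((hr.contDiffAt hz).differentiableAt (by simp))]
  refine LinearMap.range_eq_top.1 ?_
  change ((fderiv ℝ h (r z)).toLinearMap ∘ₗ (fderiv ℝ r z).toLinearMap).range = ⊤
  rw [LinearMap.range_comp, hr.range_fderiv z hz, hh.map_eq_top]

lemma jetSubmersiveAt_sliceParam [FiniteDimensional ℝ A] [FiniteDimensional ℝ Q]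
    (hr : IsTubularRetraction N O r) {h : E → Q} {F : P → A → E} {e : OpenPartialHomeomorph A A}
    {K : Submodule ℝ A} {p : P} {k : K} (he : IsStraightening e K M) (hk : (k : A) ∈ e.target)
    (hF : JetSubmersiveAt F p (sliceParam e K k)) (hO : F p (sliceParam e K k) ∈ O)
    (hh : IsDefiningMapAt h N S (r (F p (sliceParam e K k)))) :
    JetSubmersiveAt (fun q j => h (r (F q (sliceParam e K j)))) p k :=
  (hF.comp_left (θ := fun w => h (r w)) (hh.contDiffAt.comp _ (hr.contDiffAt hO))
    (hr.fderiv_comp_surjective hO hh)).comp_right (he.contDiffAt_sliceParam hk)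
    (he.fderiv_sliceParam_injective hk)

end IsTubularRetraction

end Pointwise

variable [FiniteDimensional ℝ P] [FiniteDimensional ℝ A]
  [NormedAddCommGroup E] [InnerProductSpace ℝ E] [FiniteDimensional ℝ E]
  {M : Set A} {N S O : Set E} {r : E → E} {F : P → A → E} {m d s : ℕ}

/-- The incidence set over which parametric transversality is tested: pairs of a parameter `p` and
a point of `M` at which the family `F` is jet-submersive with value in the tubular neighbourhood
`O`, but `r ∘ F p` is not transverse to `S`. -/
def badIncidence (F : P → A → E) (r : E → E) (M : Set A) (N S O : Set E) : Set (P × A) :=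
  {u | u.2 ∈ M ∧ JetSubmersiveAt F u.1 u.2 ∧ F u.1 u.2 ∈ O ∧
    ¬ TransverseAt (fun y => r (F u.1 y)) M N S u.2}

lemma IsTubularRetraction.dimH_fst_image_badIncidence_slice_le (hr : IsTubularRetraction N O r)
    {e : OpenPartialHomeomorph A A} {K : Submodule ℝ A} (he : IsStraightening e K M)
    {Q : Submodule ℝ E} (h : E → Q) :
    dimH (Prod.fst '' {u ∈ badIncidence F r M N S O | u.2 ∈ e.source ∧
      IsDefiningMapAt h N S (r (F u.1 u.2))}) ≤ (Module.finrank ℝ P - 1 : ℕ) := by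
  let X := sliceParam e K
  let G : P → K → Q := fun p k => h (r (F p (X k)))
  let D : Set (P × K) := {u | (u.2 : A) ∈ e.target ∧ JetSubmersiveAt F u.1 (X u.2) ∧
    F u.1 (X u.2) ∈ O ∧ IsDefiningMapAt h N S (r (F u.1 (X u.2)))}
  have hG : ∀ u ∈ D, JetSubmersiveAt G u.1 u.2 := fun u ⟨hk, hF, hO, hh⟩ =>
    hr.jetSubmersiveAt_sliceParam he hk hF hO hh
  refine (dimH_mono ?_).trans (dimH_setOf_not_surjective_le (J := uncurry (firstJet G)) (D := D)
    (fun u hu => (contDiffAt_firstJet (hG u hu).contDiffAt).of_le (by simp))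
    fun u hu => (hG u hu).fderiv_firstJet_surjective)
  rintro _ ⟨⟨p, x⟩, ⟨⟨hxM, hF, hO, hbad⟩, hxe, hh⟩, rfl⟩
  obtain ⟨k, hk, rfl⟩ : ∃ k : K, (k : A) ∈ e.target ∧ sliceParam e K k = x :=
    ⟨⟨e x, (he.mem_iff x hxe).1 hxM⟩, e.map_source hxe, e.left_inv hxe⟩
  refine ⟨k, ⟨hk, hF, hO, hh⟩, hh.apply_eq_zero, fun hsurj => hbad ?_⟩
  have hFp : DifferentiableAt ℝ (F p) (X k) :=
    (eventually_differentiableAt_param hF.contDiffAt).self_of_nhds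
  have hFN : ∀ᶠ y in 𝓝 (X k), r (F p y) ∈ N :=
    (hFp.continuousAt.eventually_mem (hr.isOpen.mem_nhds hO)).mono fun y hy => hr.mapsTo hy
  exact hh.transverseAt_sliceParam he hk
    (((hr.contDiffAt hO).differentiableAt (by simp)).comp _ hFp) (nhdsWithin_le_nhds hFN) hsurj

lemma IsTubularRetraction.dimH_fst_image_badIncidence_le (hr : IsTubularRetraction N O r)
    (hM : IsSubmanifoldOfDim m M) (hN : IsSubmanifoldOfDim d N) (hS : IsSubmanifoldOfDim s S)
    (hSN : S ⊆ N) :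
    dimH (Prod.fst '' badIncidence F r M N S O) ≤ (Module.finrank ℝ P - 1 : ℕ) := by
  have hval : ∀ u ∈ badIncidence F r M N S O, r (F u.1 u.2) ∈ S := fun u hu => by
    by_contra hS
    exact hu.2.2.2 fun h => (hS h).elim
  refine dimH_image_le_of_forall_exists_nhdsWithin fun u hu => ?_
  obtain ⟨e, K, hxe, -, he⟩ := hM.exists_isStraightening hu.1
  obtain ⟨Q, h, hh⟩ := hN.exists_isDefiningMapAt hS hSN (hval u hu)
  refine ⟨_, ?_, hr.dimH_fst_image_badIncidence_slice_le (F := F) (S := S) he h⟩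
  have hcont : ContinuousAt (fun v : P × A => r (F v.1 v.2)) u :=
    ContinuousAt.comp (g := r) (hr.contDiffAt hu.2.2.1).continuousAt hu.2.1.contDiffAt.continuousAt
  have htendsto : Tendsto (fun v : P × A => r (F v.1 v.2)) (𝓝[badIncidence F r M N S O] u)
      (𝓝[S] (r (F u.1 u.2))) :=
    tendsto_nhdsWithin_iff.2 ⟨hcont.tendsto.mono_left nhdsWithin_le_nhds,
      eventually_mem_nhdsWithin.mono hval⟩
  filter_upwards [self_mem_nhdsWithin, htendsto.eventually hh, nhdsWithin_le_nhds
    (continuousAt_snd.eventually_mem (e.open_source.mem_nhds hxe))] with v hv hhv hve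
  exact ⟨hv, hve, hhv⟩

lemma IsTubularRetraction.dense_setOf_transverseAt [Nontrivial P]
    (hr : IsTubularRetraction N O r) (hM : IsSubmanifoldOfDim m M) (hN : IsSubmanifoldOfDim d N)
    (hS : IsSubmanifoldOfDim s S) (hSN : S ⊆ N) (F : P → A → E) :
    Dense {p | ∀ x ∈ M, JetSubmersiveAt F p x → F p x ∈ O →
      TransverseAt (fun y => r (F p y)) M N S x} := by
  have hlt : dimH (Prod.fst '' badIncidence F r M N S O) < Module.finrank ℝ P :=
    (hr.dimH_fst_image_badIncidence_le hM hN hS hSN).trans_lt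
      (by exact_mod_cast Nat.sub_lt Module.finrank_pos one_pos)
  refine (dense_compl_of_dimH_lt_finrank hlt).mono fun p hp x hx hF hO => ?_
  by_contra hbad
  exact hp ⟨(p, x), ⟨hx, hF, hO, hbad⟩, rfl⟩

end ParametricTransversality

section PerturbationScale

variable {A E : Type*} [NormedAddCommGroup A] [NormedSpace ℝ A]
  [NormedAddCommGroup E] [NormedSpace ℝ E] {f : A → E} {W : Set A}

lemma exists_contDiffOn_forall_mem_convex_of_local_const [FiniteDimensional ℝ A] (hW : IsOpen W)
    {t : A → Set E} (ht : ∀ x ∈ W, Convex ℝ (t x)) (hloc : ∀ x ∈ W, ∃ c, ∀ᶠ y in 𝓝 x, c ∈ t y) :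
    ∃ g : A → E, ContDiffOn ℝ ∞ g W ∧ ∀ x ∈ W, g x ∈ t x := by
  let W' : TopologicalSpace.Opens A := ⟨W, hW⟩
  have : LocallyCompactSpace W' := hW.locallyCompactSpace
  obtain ⟨g, hg⟩ := exists_contMDiffMap_forall_mem_convex_of_local_const (n := ⊤) (M := W')
    𝓘(ℝ, A) (t := fun x => t x) (fun x => ht x x.2) fun x =>
      (hloc x x.2).imp fun _ hc => continuousAt_subtype_val.eventually hc
  have hext : ∀ x : W', extend Subtype.val g 0 x = g x := Subtype.val_injective.extend_apply g 0
  refine ⟨extend Subtype.val g 0, fun x hx => ContDiffAt.contDiffWithinAt ?_, fun x hx => ?_⟩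
  · rw [← contMDiffAt_iff_contDiffAt, ← contMDiffAt_subtype_iff (U := W') (x := ⟨x, hx⟩)]
    exact (g.contMDiff ⟨x, hx⟩).congr_of_eventuallyEq (.of_forall hext)
  · exact hext ⟨x, hx⟩ ▸ hg ⟨x, hx⟩

/-- A scale `ε` for affine perturbations of `f : W → O`: it is smooth on `W`, vanishes to first
order exactly on `C`, and is so small that multiplying it by `t ∈ [0, 1]` and using any parameter in
`K` keeps the perturbed map in `O`. -/
structure IsPerturbationScale (f : A → E) (W : Set A) (O : Set E) (C : Set A)
    (K : Set (E × (A →L[ℝ] E))) (ε : A → ℝ) : Prop where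
  contDiffOn : ContDiffOn ℝ ∞ ε W
  eq_zero_iff : ∀ x ∈ W, ε x = 0 ↔ x ∈ C
  fderiv_eq_zero : ∀ x ∈ W, x ∈ C → fderiv ℝ ε x = 0
  affinePerturb_mem : ∀ x ∈ W, ∀ t ∈ Icc (0 : ℝ) 1, ∀ p ∈ K, affinePerturb f (t • ε) p x ∈ O

lemma eventually_forall_affinePerturb_const_mem {x : A} {O : Set E} {K : Set (E × (A →L[ℝ] E))}
    (hf : ContinuousAt f x) (hO : O ∈ 𝓝 (f x)) (hK : IsCompact K) :
    ∀ᶠ u : ℝ × A in 𝓝 (0, x), ∀ p ∈ K, affinePerturb f (fun _ => u.1) p u.2 ∈ O := by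
  refine hK.eventually_forall_of_forall_eventually fun p _ => ?_
  have hcont : ContinuousAt (fun u : (ℝ × A) × (E × (A →L[ℝ] E)) =>
      f u.1.2 + u.1.1 • (u.2.1 + u.2.2 u.1.2)) ((0, x), p) := by
    have hf' : ContinuousAt (fun u : (ℝ × A) × (E × (A →L[ℝ] E)) => f u.1.2) ((0, x), p) :=
      ContinuousAt.comp (g := f) hf (by fun_prop)
    exact hf'.add (by fun_prop)
  exact hcont.eventually_mem (by simpa using hO)

lemma exists_contDiffOn_pos_affinePerturb_mem [FiniteDimensional ℝ A] (hW : IsOpen W)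
    (hf : ContinuousOn f W) {O : Set E} (hO : IsOpen O) (hfO : MapsTo f W O)
    {K : Set (E × (A →L[ℝ] E))} (hK : IsCompact K) :
    ∃ δ : A → ℝ, ContDiffOn ℝ ∞ δ W ∧ ∀ x ∈ W, 0 < δ x ∧
      ∀ c ∈ Icc 0 (δ x), ∀ p ∈ K, affinePerturb f (fun _ => c) p x ∈ O := by
  refine exists_contDiffOn_forall_mem_convex_of_local_const hW
    (t := fun x => {δ | 0 < δ ∧ ∀ c ∈ Icc 0 δ, ∀ p ∈ K, affinePerturb f (fun _ => c) p x ∈ O})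
    (fun x _ => OrdConnected.convex ⟨?_⟩) fun x hx => ?_
  · rintro δ₁ ⟨hδ₁, -⟩ δ₂ ⟨-, hδ₂⟩ δ hδ
    exact ⟨hδ₁.trans_le hδ.1, fun c hc => hδ₂ c ⟨hc.1, hc.2.trans hδ.2⟩⟩
  · have hmem := eventually_forall_affinePerturb_const_mem (hf.continuousAt (hW.mem_nhds hx))
      (hO.mem_nhds (hfO hx)) hK
    rw [nhds_prod_eq] at hmem
    obtain ⟨_, hsmall, _, hnear, hmem⟩ := eventually_prod_iff.1 hmem
    obtain ⟨δ, hδ, hIcc⟩ := (nhds_basis_Icc_pos (0 : ℝ)).mem_iff.1 hsmall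
    exact ⟨δ, hnear.mono fun y hy => ⟨hδ, fun c hc => hmem (hIcc ⟨by linarith [hc.1], by
      linarith [hc.2]⟩) hy⟩⟩

lemma exists_isPerturbationScale [FiniteDimensional ℝ A] (hW : IsOpen W) (hf : ContinuousOn f W)
    {O : Set E} (hO : IsOpen O) (hfO : MapsTo f W O) {C : Set A} (hC : IsClosed C)
    {K : Set (E × (A →L[ℝ] E))} (hK : IsCompact K) : ∃ ε, IsPerturbationScale f W O C K ε := by
  obtain ⟨δ, hδ, hδO⟩ := exists_contDiffOn_pos_affinePerturb_mem hW hf hO hfO hK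
  obtain ⟨χ, hsupp, hχ, hχrange⟩ :=
    IsOpen.exists_contDiff_support_eq (n := ⊤) hC.isOpen_compl
  have hχ01 : ∀ x, χ x ∈ Icc 0 1 := fun x => hχrange (mem_range_self x)
  have hχC : ∀ x, χ x = 0 ↔ x ∈ C := fun x =>
    not_iff_not.1 (mem_support.symm.trans (hsupp ▸ mem_compl_iff C x))
  refine ⟨fun x => χ x * δ x, hχ.contDiffOn.mul hδ, fun x hx => ?_, fun x hx hxC => ?_,
    fun x hx t ht p hp => ?_⟩
  · rw [mul_eq_zero_iff_right (hδO x hx).1.ne', hχC]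
  · refine IsLocalMin.fderiv_eq_zero ?_
    filter_upwards [hW.mem_nhds hx] with y hy
    rw [(hχC x).2 hxC, zero_mul]
    exact mul_nonneg (hχ01 y).1 (hδO y hy).1.le
  · have hpos := (hδO x hx).1.le
    refine (hδO x hx).2 (t * (χ x * δ x)) ⟨?_, ?_⟩ p hp
    · exact mul_nonneg ht.1 (mul_nonneg (hχ01 x).1 hpos)
    · rw [← mul_assoc]
      exact mul_le_of_le_one_left hpos (mul_le_one₀ ht.2 (hχ01 x).1 (hχ01 x).2)

end PerturbationScale

section TransversalityHomotopy

variable {A E : Type*} [NormedAddCommGroup A] [NormedSpace ℝ A]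
  [NormedAddCommGroup E] {M W C : Set A} {N S O : Set E} {r : E → E} {f : A → E} {ε : A → ℝ}

section Pointwise

variable [NormedSpace ℝ E]

lemma IsTubularRetraction.transverseAt_of_hasFDerivAt (hr : IsTubularRetraction N O r)
    {z : A → E} {x : A} (hfN : MapsTo f M N) (hx : x ∈ M)
    (hf : DifferentiableAt ℝ f x) (hzx : z x = f x) (hz : HasFDerivAt z (fderiv ℝ f x) x)
    (htrans : TransverseAt f M N S x) : TransverseAt (fun y => r (z y)) M N S x := by
  have hrz : r (z x) = f x := by rw [hzx, hr.eq_self _ (hfN hx)]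
  have hrdiff : DifferentiableAt ℝ r (f x) :=
    (hr.contDiffAt (hr.subset (hfN hx))).differentiableAt (by simp)
  have hderiv : ∀ v ∈ tangentSpaceOf M x, fderiv ℝ (fun y => r (z y)) x v = fderiv ℝ f x v := by
    intro v hv
    rw [fderiv_fun_comp x (hzx ▸ hrdiff) hz.differentiableAt, hz.fderiv, hzx]
    exact fderiv_apply_of_mem_tangentSpaceOf hrdiff hr.eq_self
      (apply_mem_tangentSpaceOf hf.hasFDerivAt (eventually_mem_nhdsWithin.mono hfN) hv)
  simp only [TransverseAt, hrz] at htrans ⊢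
  intro hfS w hw
  obtain ⟨u, hu, v, hv, rfl⟩ := htrans hfS w hw
  exact ⟨u, hu, v, hv, by rw [hderiv v hv]⟩

lemma IsPerturbationScale.affinePerturb_eq {K : Set (E × (A →L[ℝ] E))}
    (hε : IsPerturbationScale f W O C K ε) {x : A} (hx : x ∈ W) (hxC : x ∈ C)
    (p : E × (A →L[ℝ] E)) : affinePerturb f ε p x = f x := by
  rw [affinePerturb, (hε.eq_zero_iff x hx).2 hxC, zero_smul, add_zero]

lemma IsPerturbationScale.hasFDerivAt_affinePerturb {K : Set (E × (A →L[ℝ] E))}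
    (hε : IsPerturbationScale f W O C K ε) (hW : IsOpen W) {x : A} (hx : x ∈ W)
    (hxC : x ∈ C) (hf : DifferentiableAt ℝ f x) (p : E × (A →L[ℝ] E)) :
    HasFDerivAt (affinePerturb f ε p) (fderiv ℝ f x) x := by
  have hε' : DifferentiableAt ℝ ε x :=
    (hε.contDiffOn.contDiffAt (hW.mem_nhds hx)).differentiableAt (by simp)
  have hdiff : DifferentiableAt ℝ (affinePerturb f ε p) x :=
    hf.add (hε'.smul (p.2.differentiableAt.const_add p.1))
  convert hdiff.hasFDerivAt using 1
  simp [fderiv_affinePerturb hf hε', (hε.eq_zero_iff x hx).2 hxC, hε.fderiv_eq_zero x hx hxC]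

lemma IsPerturbationScale.continuousOn_homotopy {K : Set (E × (A →L[ℝ] E))}
    (hε : IsPerturbationScale f W O C K ε) (hf : ContinuousOn f W) (hr : ContinuousOn r O)
    {p : E × (A →L[ℝ] E)} (hp : p ∈ K) :
    ContinuousOn (fun q : A × ℝ => r (affinePerturb f (q.2 • ε) p q.1)) (W ×ˢ Icc 0 1) := by
  have hmaps : MapsTo (Prod.fst : A × ℝ → A) (W ×ˢ Icc 0 1) W := fun q hq => hq.1
  refine hr.comp ?_ fun q hq => hε.affinePerturb_mem _ hq.1 _ hq.2 _ hp
  exact (hf.comp continuousOn_fst hmaps).add <|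
    (continuousOn_snd.mul (hε.contDiffOn.continuousOn.comp continuousOn_fst hmaps)).smul <|
      (continuous_const.add (p.2.continuous.comp continuous_fst)).continuousOn

end Pointwise

variable [FiniteDimensional ℝ A] [InnerProductSpace ℝ E] [FiniteDimensional ℝ E] {m d s : ℕ}

lemma IsTubularRetraction.exists_transverseAt_affinePerturb (hr : IsTubularRetraction N O r)
    (hM : IsSubmanifoldOfDim m M) (hN : IsSubmanifoldOfDim d N) (hS : IsSubmanifoldOfDim s S)
    (hSN : S ⊆ N) (f : A → E) (ε : A → ℝ) :
    ∃ p ∈ Metric.closedBall (0 : E × (A →L[ℝ] E)) 1, ∀ x ∈ M, ContDiffAt ℝ ∞ f x →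
      ContDiffAt ℝ ∞ ε x → ε x ≠ 0 → affinePerturb f ε p x ∈ O →
      TransverseAt (fun y => r (affinePerturb f ε p y)) M N S x := by
  rcases subsingleton_or_nontrivial E with hE | hE
  · exact ⟨0, Metric.mem_closedBall_self zero_le_one, fun x _ _ _ _ _ _ w _ =>
      ⟨0, zero_mem _, 0, zero_mem _, Subsingleton.elim _ _⟩⟩
  obtain ⟨p, hp, hpball⟩ := (hr.dense_setOf_transverseAt hM hN hS hSN
    (affinePerturb f ε)).exists_mem_open Metric.isOpen_ball (Metric.nonempty_ball.2 one_pos)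
  exact ⟨p, Metric.ball_subset_closedBall hpball, fun x hx hf hε hεx =>
    hp x hx (jetSubmersiveAt_affinePerturb hf hε hεx)⟩

theorem transversality_homotopy_general (hM : IsSubmanifoldOfDim m M)
    (hN : IsSubmanifoldOfDim d N) (hSN : S ⊆ N) (hS : IsSubmanifoldOfDim s S) {V : Set A}
    (hV : IsOpen V) (hMV : M ⊆ V) (hf : ContDiffOn ℝ ∞ f V) (hfN : MapsTo f M N)
    (hC : IsClosed C) (hfC : ∀ x ∈ M ∩ C, TransverseAt f M N S x) :
    ∃ g : A → E, (∃ W, IsOpen W ∧ M ⊆ W ∧ ContDiffOn ℝ ∞ g W) ∧ MapsTo g M N ∧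
      (∀ x ∈ M, TransverseAt g M N S x) ∧
      (∃ H : A × ℝ → E, ContinuousOn H (M ×ˢ Icc (0 : ℝ) 1) ∧ MapsTo H (M ×ˢ Icc (0 : ℝ) 1) N ∧
        (∀ x ∈ M, H (x, 0) = f x) ∧ ∀ x ∈ M, H (x, 1) = g x) ∧
      EqOn f g (M ∩ C) := by
  obtain ⟨O, r, hr⟩ := hN.exists_isTubularRetraction
  let W := V ∩ f ⁻¹' O
  have hW : IsOpen W := hf.continuousOn.isOpen_inter_preimage hV hr.isOpen
  have hMW : M ⊆ W := fun x hx => ⟨hMV hx, hr.subset (hfN hx)⟩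
  have hfW : ContDiffOn ℝ ∞ f W := hf.mono inter_subset_left
  obtain ⟨ε, hε⟩ := exists_isPerturbationScale hW hfW.continuousOn hr.isOpen (fun x hx => hx.2) hC
    (isCompact_closedBall (0 : E × (A →L[ℝ] E)) 1)
  obtain ⟨p, hp, htrans⟩ := hr.exists_transverseAt_affinePerturb hM hN hS hSN f ε
  have hgO : MapsTo (affinePerturb f ε p) W O := fun x hx => by
    simpa only [one_smul] using hε.affinePerturb_mem x hx 1 (right_mem_Icc.2 zero_le_one) p hp
  have hg : ContDiffOn ℝ ∞ (affinePerturb f ε p) W :=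
    hfW.add (hε.contDiffOn.smul (contDiff_const.add p.2.contDiff).contDiffOn)
  refine ⟨fun x => r (affinePerturb f ε p x), ⟨W, hW, hMW, hr.contDiffOn.comp hg hgO⟩,
    fun x hx => hr.mapsTo (hgO (hMW hx)), fun x hx => ?_,
    ⟨fun q => r (affinePerturb f (q.2 • ε) p q.1), ?_, ?_, ?_, ?_⟩, ?_⟩
  · have hfx : ContDiffAt ℝ ∞ f x := hfW.contDiffAt (hW.mem_nhds (hMW hx))
    by_cases hxC : x ∈ C
    · have hdf : DifferentiableAt ℝ f x := hfx.differentiableAt (by simp)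
      exact hr.transverseAt_of_hasFDerivAt hfN hx hdf (hε.affinePerturb_eq (hMW hx) hxC p)
        (hε.hasFDerivAt_affinePerturb hW (hMW hx) hxC hdf p) (hfC x ⟨hx, hxC⟩)
    · exact htrans x hx hfx (hε.contDiffOn.contDiffAt (hW.mem_nhds (hMW hx)))
        (mt (hε.eq_zero_iff x (hMW hx)).1 hxC) (hgO (hMW hx))
  · exact (hε.continuousOn_homotopy hfW.continuousOn hr.contDiffOn.continuousOn hp).mono
      (prod_mono_left hMW)
  · exact fun q hq => hr.mapsTo (hε.affinePerturb_mem _ (hMW hq.1) _ hq.2 _ hp)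
  · exact fun x hx => by simp [affinePerturb, hr.eq_self _ (hfN hx)]
  · exact fun x _ => by simp only [one_smul]
  · exact fun x hx => by
      simp only [hε.affinePerturb_eq (hMW hx.1) hx.2 p, hr.eq_self _ (hfN hx.1)]

end TransversalityHomotopy

/-- **Transversality Homotopy Theorem.** A smooth map `f : M → N` is homotopic (through maps
`M → N`) to a smooth map `g` transverse to a given submanifold `S ⊂ N`; if `f` is already
transverse to `S` at every point of a closed subset `A ⊂ M`, then `g` can be chosen with
`g|_A = f|_A`. -/
theorem transversality_homotopy (a b m dN s : ℕ) (M : Set (Euc a)) (N S : Set (Euc b))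
    (hM : IsSubmanifoldOfDim m M) (hN : IsSubmanifoldOfDim dN N)
    (hSN : S ⊆ N) (hS : IsSubmanifoldOfDim s S)
    (f : Euc a → Euc b)
    (V : Set (Euc a)) (hV : IsOpen V) (hMV : M ⊆ V) (hf : ContDiffOn ℝ (⊤ : ℕ∞) f V)
    (hmaps : MapsTo f M N)
    (A C : Set (Euc a)) (hC : IsClosed C) (hA : A = M ∩ C)
    (hfA : ∀ x ∈ A, f x ∈ S →
      ∀ w ∈ tangentSpaceOf N (f x), ∃ u ∈ tangentSpaceOf S (f x),
        ∃ v ∈ tangentSpaceOf M x, w = u + fderiv ℝ f x v) :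
    ∃ g : Euc a → Euc b,
      (∃ W, IsOpen W ∧ M ⊆ W ∧ ContDiffOn ℝ (⊤ : ℕ∞) g W) ∧
      MapsTo g M N ∧
      TransverseOn g M N S ∧
      -- f and g are homotopic through maps M → N
      (∃ H : Euc a × ℝ → Euc b, ContinuousOn H (M ×ˢ Icc (0:ℝ) 1) ∧
        MapsTo H (M ×ˢ Icc (0:ℝ) 1) N ∧
        (∀ x ∈ M, H (x, 0) = f x) ∧ (∀ x ∈ M, H (x, 1) = g x)) ∧
      EqOn f g A := by
  subst hA
  exact transversality_homotopy_general hM hN hSN hS hV hMV hf hmaps hC hfA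
end
end

section
/- (Product Neighborhood Theorem) Let (M, ν) be a closed k-dimensional framed submanifold of ℝ^{n+k}, i.e., ν assigns smoothly to each x ∈ M a basis ν(x) = (ν₁(x),…,ν_n(x)) of the normal space N_xM. Then there is an open neighborhood U of M in ℝ^{n+k} and a diffeomorphism M × ℝ^n → U sending each (x,0) to x and such that the differential at (x,0) carries the standard basis of ℝ^n to the frame ν(x). -/
/- Framework: embedded submanifolds of Euclidean space (Guillemin–Pollack style),
tangent spaces via velocity vectors of curves, local-straightening charts. -/

noncomputable section
open Set Function
open scoped RealInnerProductSpace

/-! Extend the frame to a smooth family of linear maps `A y : ℝⁿ → ℝⁿ⁺ᵏ` on the whole ambient space,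
using local smooth retractions onto `M` and a partition of unity, and consider
`f (y, v) = y + A y v`. If `h` is a local defining map of `M` near `x`, then
`(y, v) ↦ (f (y, v), h y)` is a local diffeomorphism at `(x, 0)`, because the frame spans a
complement of `T_xM = ker dh`; hence `f` restricted to `M × ℝⁿ` has a smooth local inverse near
each `(x, 0)`. As `f` is injective on the compact set `M × {0}`, it is a diffeomorphism from
`M × B(0, ε)` onto an open set for some `ε > 0`, and `ℝⁿ` is diffeomorphic to `B(0, ε)` by a map
with derivative the identity at the origin. -/

open scoped ContDiff Topology Manifold

section InverseFunction

variable {𝕜 X Y : Type*} [RCLike 𝕜] [NormedAddCommGroup X] [NormedSpace 𝕜 X] [CompleteSpace X]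
  [NormedAddCommGroup Y] [NormedSpace 𝕜 Y]

theorem exists_openPartialHomeomorph_of_contDiffOn {n : WithTop ℕ∞} {f : X → Y} {s : Set X}
    {a : X} {f' : X ≃L[𝕜] Y} (hn : n ≠ 0) (hs : IsOpen s) (hf : ContDiffOn 𝕜 n f s) (ha : a ∈ s)
    (hf' : HasFDerivAt f (f' : X →L[𝕜] Y) a) :
    ∃ e : OpenPartialHomeomorph X Y, ⇑e = f ∧ a ∈ e.source ∧ e.source ⊆ s ∧
      ContDiffOn 𝕜 n e.symm e.target := by
  have hfa : ContDiffAt 𝕜 n f a := hf.contDiffAt (hs.mem_nhds ha)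
  let t : Set X := s ∩ fderiv 𝕜 f ⁻¹' range ((↑) : (X ≃L[𝕜] Y) → X →L[𝕜] Y)
  have ht : IsOpen t :=
    (hf.continuousOn_fderiv_of_isOpen hs
      (ENat.one_le_iff_ne_zero_withTop.2 hn)).isOpen_inter_preimage hs ContinuousLinearEquiv.isOpen
  let e := (hfa.toOpenPartialHomeomorph f hf' hn).restrOpen t ht
  have het : e.source ⊆ t := fun _ hx => hx.2
  refine ⟨e, rfl, ⟨hfa.mem_toOpenPartialHomeomorph_source hf' hn, ha, f', hf'.fderiv.symm⟩,
    het.trans inter_subset_left, fun u hu => ?_⟩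
  obtain ⟨hus, g, hg⟩ := het (e.map_target hu)
  have hfu : ContDiffAt 𝕜 n f (e.symm u) := hf.contDiffAt (hs.mem_nhds hus)
  refine (e.contDiffAt_symm (f₀' := g) hu ?_ hfu).contDiffWithinAt
  rw [hg]
  exact (hfu.differentiableAt hn).hasFDerivAt

end InverseFunction

section LocalInverse

theorem exists_isOpen_superset_injOn_inter {X Y : Type*} [TopologicalSpace X] [TopologicalSpace Y]
    [T2Space Y] {f : X → Y} {s Z : Set X} (hf : ContinuousOn f s) (hZ : IsCompact Z)
    (hZs : Z ⊆ s) (hinj : InjOn f Z) (hloc : ∀ x ∈ Z, ∃ u ∈ 𝓝[s] x, InjOn f u) :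
    ∃ O, IsOpen O ∧ Z ⊆ O ∧ InjOn f (s ∩ O) := by
  have hZc : IsCompact ((↑) ⁻¹' Z : Set s) :=
    (Topology.IsInducing.subtypeVal.isCompact_preimage_iff (by simpa using hZs)).2 hZ
  obtain ⟨T, hT, hZT, hTinj⟩ := InjOn.exists_isOpen_superset (f := s.domRestrict f)
    (fun x hx y hy hxy => Subtype.ext (hinj hx hy hxy)) hZc
    (fun x _ => hf.domRestrict.continuousAt) fun x hx => by
      obtain ⟨u, hu, huinj⟩ := hloc x hx
      exact ⟨Subtype.val ⁻¹' u, preimage_coe_mem_nhds_subtype.2 hu,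
        fun y hy z hz hyz => Subtype.ext (huinj hy hz hyz)⟩
  obtain ⟨O, hO, rfl⟩ := isOpen_induced_iff.1 hT
  exact ⟨O, hO, fun x hx => @hZT ⟨x, hZs hx⟩ hx, fun x hx y hy hxy =>
    congrArg Subtype.val (@hTinj ⟨x, hx.1⟩ hx.2 ⟨y, hy.1⟩ hy.2 hxy)⟩

variable {X Y : Type*} [NormedAddCommGroup X] [NormedSpace ℝ X]
  [NormedAddCommGroup Y] [NormedSpace ℝ Y]

/-- A smooth inverse near `f p` of the restriction of `f` to `s`. Since `s` need not be open, the
inverse is a smooth map `g` of ambient spaces, defined on an open `V ∋ f p` and with values in `s`;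
smoothness of `f` itself is not part of the notion. -/
def HasSmoothLocalInverseWithinAt (f : X → Y) (s : Set X) (p : X) : Prop :=
  ∃ (V : Set Y) (g : Y → X), IsOpen V ∧ f p ∈ V ∧ ContDiffOn ℝ ∞ g V ∧ MapsTo g V s ∧
    RightInvOn g f V ∧ ∀ᶠ q in 𝓝[s] p, g (f q) = q

namespace HasSmoothLocalInverseWithinAt

variable {f : X → Y} {s : Set X} {p : X}

theorem of_openPartialHomeomorph {Z : Type*} [NormedAddCommGroup Z] [NormedSpace ℝ Z] {h : X → Z}
    (e : OpenPartialHomeomorph X (Y × Z)) (he : ∀ q ∈ e.source, e q = (f q, h q))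
    (he' : ContDiffOn ℝ ∞ e.symm e.target) (hsh : ∀ q ∈ e.source, q ∈ s ↔ h q = 0)
    (hpe : p ∈ e.source) (hps : p ∈ s) : HasSmoothLocalInverseWithinAt f s p := by
  have hι : ContDiff ℝ ∞ fun u : Y => (u, (0 : Z)) := contDiff_id.prodMk contDiff_const
  have he_s {q} (hqs : q ∈ s) (hqe : q ∈ e.source) : e q = (f q, 0) := by
    rw [he q hqe, (hsh q hqe).1 hqs]
  have he_symm {u} (hu : (u, 0) ∈ e.target) :
      f (e.symm (u, 0)) = u ∧ h (e.symm (u, 0)) = 0 := by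
    rw [← Prod.mk_inj, ← he _ (e.map_target hu), e.right_inv hu]
  refine ⟨(fun u => (u, 0)) ⁻¹' e.target, fun u => e.symm (u, 0),
    e.open_target.preimage hι.continuous, ?_, he'.comp hι.contDiffOn fun u hu => hu,
    fun u hu => (hsh _ (e.map_target hu)).2 (he_symm hu).2, fun u hu => (he_symm hu).1, ?_⟩
  · rw [mem_preimage, ← he_s hps hpe]
    exact e.map_source hpe
  · filter_upwards [self_mem_nhdsWithin, mem_nhdsWithin_of_mem_nhds (e.open_source.mem_nhds hpe)]
      with q hqs hqe
    rw [← he_s hqs hqe, e.left_inv hqe]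

theorem eventually (h : HasSmoothLocalInverseWithinAt f s p) (hf : ContinuousWithinAt f s p) :
    ∀ᶠ q in 𝓝[s] p, HasSmoothLocalInverseWithinAt f s q := by
  obtain ⟨V, g, hV, hpV, hg, hgs, hfg, hgf⟩ := h
  filter_upwards [eventually_eventually_nhdsWithin.2 hgf, hf (hV.mem_nhds hpV)] with q hq hqV
  exact ⟨V, g, hV, hqV, hg, hgs, hfg, hq⟩

theorem exists_injOn (h : HasSmoothLocalInverseWithinAt f s p) : ∃ u ∈ 𝓝[s] p, InjOn f u := by
  obtain ⟨V, g, -, -, -, -, -, hgf⟩ := h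
  exact ⟨_, hgf, LeftInvOn.injOn fun _ hq => hq⟩

theorem inter (h : HasSmoothLocalInverseWithinAt f s p) {O : Set X} (hO : IsOpen O) (hps : p ∈ s)
    (hpO : p ∈ O) : HasSmoothLocalInverseWithinAt f (s ∩ O) p := by
  obtain ⟨V, g, hV, hpV, hg, hgs, hfg, hgf⟩ := h
  have hgp : g (f p) = p := hgf.self_of_nhdsWithin hps
  refine ⟨V ∩ g ⁻¹' O, g, hg.continuousOn.isOpen_inter_preimage hV hO, ⟨hpV, ?_⟩,
    hg.mono inter_subset_left, fun u hu => ⟨hgs hu.1, hu.2⟩, hfg.mono inter_subset_left,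
    hgf.filter_mono (nhdsWithin_mono _ inter_subset_left)⟩
  rwa [mem_preimage, hgp]

theorem isOpen_image (h : ∀ p ∈ s, HasSmoothLocalInverseWithinAt f s p) : IsOpen (f '' s) := by
  refine isOpen_iff_mem_nhds.2 ?_
  rintro _ ⟨p, hp, rfl⟩
  obtain ⟨V, g, hV, hpV, -, hgs, hfg, -⟩ := h p hp
  exact Filter.mem_of_superset (hV.mem_nhds hpV) fun u hu => ⟨g u, hgs hu, hfg hu⟩

theorem contDiffOn_invFunOn [Nonempty X] (h : ∀ p ∈ s, HasSmoothLocalInverseWithinAt f s p)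
    (hinj : InjOn f s) : ContDiffOn ℝ ∞ (invFunOn f s) (f '' s) := by
  rintro _ ⟨p, hp, rfl⟩
  obtain ⟨V, g, hV, hpV, hg, hgs, hfg, -⟩ := h p hp
  have hinv : EqOn (invFunOn f s) g V := fun u hu => by
    have hu' : u ∈ f '' s := ⟨g u, hgs hu, hfg hu⟩
    exact hinj (invFunOn_mem hu') (hgs hu) ((invFunOn_eq hu').trans (hfg hu).symm)
  exact ((hg.congr hinv).contDiffAt (hV.mem_nhds hpV)).contDiffWithinAt

theorem exists_isOpen_superset {Z : Set X} (hf : ContinuousOn f s) (hZ : IsCompact Z)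
    (hZs : Z ⊆ s) (hinj : InjOn f Z) (h : ∀ p ∈ Z, HasSmoothLocalInverseWithinAt f s p) :
    ∃ O, IsOpen O ∧ Z ⊆ O ∧ InjOn f (s ∩ O) ∧
      ∀ p ∈ s ∩ O, HasSmoothLocalInverseWithinAt f s p := by
  obtain ⟨O₁, hO₁, hZO₁, hinjO⟩ := exists_isOpen_superset_injOn_inter hf hZ hZs hinj
    fun p hp => (h p hp).exists_injOn
  have hloc : ∀ p ∈ Z, ∃ u, IsOpen u ∧ p ∈ u ∧
      ∀ q ∈ u ∩ s, HasSmoothLocalInverseWithinAt f s q := fun p hp =>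
    mem_nhdsWithin.1 ((h p hp).eventually (hf p (hZs hp)))
  choose! u hu hpu hus using hloc
  refine ⟨O₁ ∩ ⋃ p ∈ Z, u p, hO₁.inter (isOpen_biUnion hu),
    fun p hp => ⟨hZO₁ hp, mem_biUnion hp (hpu p hp)⟩,
    hinjO.mono (inter_subset_inter_right _ inter_subset_left), ?_⟩
  rintro q ⟨hqs, -, hqu⟩
  obtain ⟨p, hp, hqp⟩ := mem_iUnion₂.1 hqu
  exact hus p hp q ⟨hqp, hqs⟩

end HasSmoothLocalInverseWithinAt

end LocalInverse

section Ball

variable {F : Type*} [NormedAddCommGroup F] [InnerProductSpace ℝ F]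

theorem hasFDerivAt_univUnitBall_zero :
    HasFDerivAt (OpenPartialHomeomorph.univUnitBall : F → F) (ContinuousLinearMap.id ℝ F) 0 := by
  have hpos (x : F) : 0 < 1 + ‖x‖ ^ 2 := by positivity
  have hscale : DifferentiableAt ℝ (fun x : F => (√(1 + ‖x‖ ^ 2))⁻¹) 0 :=
    (((contDiff_const.add (contDiff_norm_sq ℝ)).sqrt fun x => (hpos x).ne').inv
      fun x => Real.sqrt_ne_zero'.2 (hpos x)).differentiable one_ne_zero 0
  refine (hscale.hasFDerivAt.smul (hasFDerivAt_id (0 : F))).congr_fderiv ?_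
  ext v
  simp

theorem exists_openPartialHomeomorph_univ_ball {ε : ℝ} (hε : 0 < ε) :
    ∃ σ : OpenPartialHomeomorph F F, σ.source = univ ∧ σ.target = Metric.ball 0 ε ∧
      ContDiff ℝ ∞ σ ∧ ContDiffOn ℝ ∞ σ.symm σ.target ∧ σ 0 = 0 ∧
      HasFDerivAt σ (ContinuousLinearMap.id ℝ F) 0 := by
  let c : F ≃ₜ F := Homeomorph.smulOfNeZero ε⁻¹ (inv_ne_zero hε.ne')
  let σ : OpenPartialHomeomorph F F := c.transOpenPartialHomeomorph (.univBall 0 ε)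
  have hσ : ⇑σ = fun v => ε • OpenPartialHomeomorph.univUnitBall (ε⁻¹ • v) := by
    ext v
    simp [σ, c, OpenPartialHomeomorph.univBall, hε, OpenPartialHomeomorph.unitBallBall]
  have htarget : σ.target = Metric.ball 0 ε := OpenPartialHomeomorph.univBall_target 0 hε
  refine ⟨σ, by simp [σ], htarget,
    OpenPartialHomeomorph.contDiff_univBall.comp (contDiff_const_smul ε⁻¹), ?_, by simp [hσ], ?_⟩
  · rw [htarget]
    exact OpenPartialHomeomorph.contDiffOn_univBall_symm.const_smul (ε⁻¹)⁻¹
  · have hinner : HasFDerivAt (fun v : F => ε⁻¹ • v) (ε⁻¹ • ContinuousLinearMap.id ℝ F) 0 :=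
      (hasFDerivAt_id 0).const_smul ε⁻¹
    have houter : HasFDerivAt (OpenPartialHomeomorph.univUnitBall : F → F)
        (ContinuousLinearMap.id ℝ F) (ε⁻¹ • 0) := by
      rw [smul_zero]
      exact hasFDerivAt_univUnitBall_zero
    rw [hσ]
    refine ((houter.comp 0 hinner).const_smul ε).congr_fderiv ?_
    ext v
    simp [hε.ne']

end Ball

section Submanifold

variable {E : Type*} [NormedAddCommGroup E] [NormedSpace ℝ E] {M : Set E} {x : E} {k : ℕ}

theorem mem_tangentSpaceOf_of_eventually_mem {γ : ℝ → E} {w : E} (hx : x ∈ M) (hγx : γ 0 = x)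
    (hγM : ∀ᶠ t in 𝓝 0, γ t ∈ M) (hγ : HasDerivAt γ w 0) : w ∈ tangentSpaceOf M x := by
  classical
  refine Submodule.subset_span ⟨fun t => if γ t ∈ M then γ t else x, fun t => ?_, by simp [hγx],
    hγ.congr_of_eventuallyEq ?_⟩
  · dsimp only
    split_ifs with ht
    exacts [ht, hx]
  · filter_upwards [hγM] with t ht using if_pos ht

theorem mem_tangentSpaceOf_of_fderiv_chart_mem {e : OpenPartialHomeomorph E E}
    {K : Submodule ℝ E} {w : E} (hxe : x ∈ e.source) (hx : x ∈ M) (he : DifferentiableAt ℝ e x)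
    (he' : DifferentiableAt ℝ e.symm (e x)) (hMK : ∀ y ∈ e.source, y ∈ M ↔ e y ∈ K)
    (hw : fderiv ℝ e x w ∈ K) : w ∈ tangentSpaceOf M x := by
  let l : ℝ → E := fun t => e x + t • fderiv ℝ e x w
  have hl0 : l 0 = e x := by simp [l]
  have hl : HasDerivAt l (fderiv ℝ e x w) 0 :=
    (((hasDerivAt_id (0 : ℝ)).smul_const (fderiv ℝ e x w)).const_add (e x)).congr_deriv
      (one_smul ℝ _)
  have hinv : fderiv ℝ e.symm (e x) (fderiv ℝ e x w) = w := by
    have hid : HasFDerivAt (e.symm ∘ e) (ContinuousLinearMap.id ℝ E) x :=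
      (hasFDerivAt_id x).congr_of_eventuallyEq (e.eventually_left_inverse hxe)
    exact congrArg (· w) ((he'.hasFDerivAt.comp x he.hasFDerivAt).unique hid)
  refine mem_tangentSpaceOf_of_eventually_mem (γ := e.symm ∘ l) hx (by simp [hl0, hxe]) ?_ ?_
  · filter_upwards [hl.continuousAt.eventually_mem
      (hl0 ▸ e.open_target.mem_nhds (e.map_source hxe))] with t ht
    rw [comp_apply, hMK _ (e.map_target ht), e.right_inv ht]
    exact K.add_mem ((hMK x hxe).1 hx) (K.smul_mem t hw)
  · have := (hl0 ▸ he'.hasFDerivAt : HasFDerivAt e.symm (fderiv ℝ e.symm (e x)) (l 0))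
    exact hinv ▸ this.comp_hasDerivAt 0 hl

theorem IsSubmanifoldOfDim.exists_chart (hM : IsSubmanifoldOfDim k M) (hx : x ∈ M) :
    ∃ (e : OpenPartialHomeomorph E E) (K : Submodule ℝ E), Module.finrank ℝ K = k ∧
      x ∈ e.source ∧ ContDiffOn ℝ ∞ e e.source ∧ ContDiffOn ℝ ∞ e.symm e.target ∧
      ∀ y ∈ e.source, y ∈ M ↔ e y ∈ K := by
  obtain ⟨U, V, φ, ψ, K, hK, hU, hV, hxU, hφ, hψ, hφV, hψU, hψφ, hφψ, hMU⟩ := hM x hx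
  let e : OpenPartialHomeomorph E E :=
    { toFun := φ
      invFun := ψ
      source := U
      target := V
      map_source' := hφV
      map_target' := hψU
      left_inv' := hψφ
      right_inv' := hφψ
      open_source := hU
      open_target := hV
      continuousOn_toFun := hφ.continuousOn
      continuousOn_invFun := hψ.continuousOn }
  refine ⟨e, K, hK, hxU, hφ, hψ, fun y hy => ?_⟩
  exact ⟨fun hyM => (hMU.le ⟨hyM, hy⟩).2, fun hyK => (hMU.ge ⟨hy, hyK⟩).1⟩

theorem IsSubmanifoldOfDim.exists_local_retraction [FiniteDimensional ℝ E]
    (hM : IsSubmanifoldOfDim k M) (hx : x ∈ M) :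
    ∃ (U : Set E) (r : E → E), IsOpen U ∧ x ∈ U ∧ ContDiffOn ℝ ∞ r U ∧ MapsTo r U M ∧
      ∀ y ∈ M ∩ U, r y = y := by
  obtain ⟨e, K, -, hxe, he, he', hMK⟩ := hM.exists_chart hx
  obtain ⟨π, hπ⟩ := Submodule.ClosedComplemented.of_finiteDimensional K
  have hπe {y} (hyM : y ∈ M) (hye : y ∈ e.source) : (π (e y) : E) = e y :=
    congrArg Subtype.val (hπ ⟨e y, (hMK y hye).1 hyM⟩)
  have hπe_smooth : ContDiffOn ℝ ∞ (fun y => (π (e y) : E)) e.source :=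
    (K.subtypeL ∘L π).contDiff.comp_contDiffOn he
  refine ⟨e.source ∩ (fun y => (π (e y) : E)) ⁻¹' e.target, fun y => e.symm (π (e y)),
    hπe_smooth.continuousOn.isOpen_inter_preimage e.open_source e.open_target,
    ⟨hxe, ?_⟩, he'.comp (hπe_smooth.mono inter_subset_left) fun y hy => hy.2, ?_, ?_⟩
  · rw [mem_preimage, hπe hx hxe]
    exact e.map_source hxe
  · rintro y ⟨-, hy⟩
    rw [hMK _ (e.map_target hy), e.right_inv hy]
    exact (π (e y)).2
  · rintro y ⟨hyM, hye, -⟩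
    dsimp only
    rw [hπe hyM hye, e.left_inv hye]

theorem IsSubmanifoldOfDim.exists_contDiff_extension [FiniteDimensional ℝ E] {n : ℕ∞} {F : Type*}
    [NormedAddCommGroup F] [NormedSpace ℝ F] {f : E → F} (hM : IsSubmanifoldOfDim k M)
    (hMc : IsClosed M) (hf : ContDiffOn ℝ n f M) :
    ∃ g : E → F, ContDiff ℝ n g ∧ EqOn g f M := by
  let t : E → Set F := fun x => {y | x ∈ M → y = f x}
  have ht (x : E) : Convex ℝ (t x) := by
    by_cases hx : x ∈ M
    · simp [t, hx]
    · simp [t, hx, convex_univ]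
  obtain ⟨g, hg⟩ := exists_contMDiffMap_forall_mem_convex_of_local 𝓘(ℝ, E) (n := n) ht fun x => by
    by_cases hx : x ∈ M
    · obtain ⟨U, r, hU, hxU, hr, hrM, hrid⟩ := hM.exists_local_retraction hx
      exact ⟨U, hU.mem_nhds hxU, f ∘ r, (hf.comp (hr.of_le (mod_cast le_top)) hrM).contMDiffOn,
        fun y hy hyM => congrArg f (hrid y ⟨hyM, hy⟩)⟩
    · exact ⟨Mᶜ, hMc.isOpen_compl.mem_nhds hx, 0, contMDiffOn_const,
        fun y hy hyM => absurd hyM hy⟩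
  exact ⟨g, g.contMDiff.contDiff, hg⟩

theorem exists_continuousLinearMap_ker_eq [FiniteDimensional ℝ E] {F : Type*}
    [NormedAddCommGroup F] [NormedSpace ℝ F] [FiniteDimensional ℝ F] (K : Submodule ℝ E)
    (hK : Module.finrank ℝ F + Module.finrank ℝ K = Module.finrank ℝ E) :
    ∃ q : E →L[ℝ] F, q.ker = K := by
  have hdim : Module.finrank ℝ (E ⧸ K) = Module.finrank ℝ F := by
    have := K.finrank_quotient_add_finrank
    omega
  let q : E →ₗ[ℝ] F := (LinearEquiv.ofFinrankEq _ _ hdim).toLinearMap ∘ₗ K.mkQ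
  exact ⟨q.toContinuousLinearMap, by ext; simp [q]⟩

theorem IsSubmanifoldOfDim.exists_local_defining_map [FiniteDimensional ℝ E] {F : Type*}
    [NormedAddCommGroup F] [NormedSpace ℝ F] [FiniteDimensional ℝ F]
    (hM : IsSubmanifoldOfDim k M) (hdim : Module.finrank ℝ F + k = Module.finrank ℝ E)
    (hx : x ∈ M) :
    ∃ (U : Set E) (h : E → F), IsOpen U ∧ x ∈ U ∧ ContDiffOn ℝ ∞ h U ∧
      (∀ y ∈ U, y ∈ M ↔ h y = 0) ∧ (fderiv ℝ h x).ker ≤ tangentSpaceOf M x := by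
  obtain ⟨e, K, hK, hxe, he, he', hMK⟩ := hM.exists_chart hx
  obtain ⟨q, hq⟩ := exists_continuousLinearMap_ker_eq (F := F) K (hK ▸ hdim)
  have hMq (y) (hy : y ∈ e.source) : y ∈ M ↔ q (e y) = 0 := by
    rw [hMK y hy, ← hq, LinearMap.mem_ker]; rfl
  have hde : DifferentiableAt ℝ e x :=
    (he.contDiffAt (e.open_source.mem_nhds hxe)).differentiableAt (by simp)
  have hde' : DifferentiableAt ℝ e.symm (e x) :=
    (he'.contDiffAt (e.open_target.mem_nhds (e.map_source hxe))).differentiableAt (by simp)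
  refine ⟨e.source, q ∘ e, e.open_source, hxe, q.contDiff.comp_contDiffOn he, hMq, fun w hw => ?_⟩
  refine mem_tangentSpaceOf_of_fderiv_chart_mem hxe hx hde hde' hMK ?_
  rw [← hq]
  rwa [(q.hasFDerivAt.comp x hde.hasFDerivAt).fderiv] at hw

end Submanifold

section TubularMap

variable {E F : Type*} [NormedAddCommGroup E] [NormedSpace ℝ E] [NormedAddCommGroup F]
  [NormedSpace ℝ F] {A : E → F →L[ℝ] E} {M : Set E} {x : E} {k : ℕ}

/-- The map `(x, v) ↦ x + A x v` attached to a family of linear maps `A x : F → E`; for a normal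
frame `ν` and `A x v = ∑ i, v i • ν i x` it pushes `x` along its normal space. -/
def tubularMap (A : E → F →L[ℝ] E) (p : E × F) : E := p.1 + A p.1 p.2

theorem tubularMap_zero (A : E → F →L[ℝ] E) (x : E) : tubularMap A (x, 0) = x := by
  simp [tubularMap]

theorem contDiff_tubularMap {n : WithTop ℕ∞} (hA : ContDiff ℝ n A) :
    ContDiff ℝ n (tubularMap A) :=
  contDiff_fst.add ((hA.comp contDiff_fst).clm_apply contDiff_snd)

theorem hasFDerivAt_tubularMap_zero (hA : DifferentiableAt ℝ A x) :
    HasFDerivAt (tubularMap A) ((ContinuousLinearMap.id ℝ E).coprod (A x)) (x, 0) := by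
  have hA' : HasFDerivAt (fun p : E × F => A p.1)
      (fderiv ℝ A x ∘L ContinuousLinearMap.fst ℝ E F) (x, 0) :=
    hA.hasFDerivAt.comp (x, (0 : F)) hasFDerivAt_fst
  refine (hasFDerivAt_fst.add (hA'.clm_apply hasFDerivAt_snd)).congr_fderiv ?_
  ext <;> simp

theorem injective_prod_of_disjoint_ker_range {B : F →L[ℝ] E} {D : E →L[ℝ] F} (hB : Injective B)
    (hBD : Disjoint D.ker B.range) :
    Injective (((ContinuousLinearMap.id ℝ E).coprod B).prod
      (D ∘L ContinuousLinearMap.fst ℝ E F)) := by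
  rw [injective_iff_map_eq_zero]
  rintro ⟨w, v⟩ hwv
  obtain ⟨hw, hD⟩ : w + B v = 0 ∧ D w = 0 := by simpa using hwv
  have hw0 : w = 0 := Submodule.disjoint_def.1 hBD w hD
    ⟨-v, by simpa using (eq_neg_of_add_eq_zero_left hw).symm⟩
  have hv0 : v = 0 := hB (by simpa [hw0] using hw)
  rw [hw0, hv0, Prod.mk_zero_zero]

variable [FiniteDimensional ℝ E] [FiniteDimensional ℝ F]

theorem IsSubmanifoldOfDim.hasSmoothLocalInverseWithinAt_tubularMap (hM : IsSubmanifoldOfDim k M)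
    (hdim : Module.finrank ℝ F + k = Module.finrank ℝ E) (hA : ContDiff ℝ ∞ A) (hx : x ∈ M)
    (hinj : Injective (A x)) (htrans : Disjoint (tangentSpaceOf M x) (A x).range) :
    HasSmoothLocalInverseWithinAt (tubularMap A) (M ×ˢ univ) (x, 0) := by
  obtain ⟨U, h, hU, hxU, hh, hMh, hker⟩ := hM.exists_local_defining_map (F := F) hdim hx
  let G : E × F → E × F := fun p => (tubularMap A p, h p.1)
  have hG : ContDiffOn ℝ ∞ G (U ×ˢ univ) :=
    (contDiff_tubularMap hA).contDiffOn.prodMk (hh.comp contDiff_fst.contDiffOn fun p hp => hp.1)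
  have hdh : HasFDerivAt h (fderiv ℝ h x) x :=
    ((hh.contDiffAt (hU.mem_nhds hxU)).differentiableAt (by simp)).hasFDerivAt
  let G' : E × F →L[ℝ] E × F :=
    ((ContinuousLinearMap.id ℝ E).coprod (A x)).prod
      (fderiv ℝ h x ∘L ContinuousLinearMap.fst ℝ E F)
  have hG' : HasFDerivAt G G' (x, 0) :=
    (hasFDerivAt_tubularMap_zero (hA.differentiable (by simp) x)).prodMk
      (hdh.comp (x, (0 : F)) hasFDerivAt_fst)
  have hG'_inj : Injective (G' : E × F →ₗ[ℝ] E × F) :=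
    injective_prod_of_disjoint_ker_range hinj (htrans.mono_left hker)
  let G'equiv : (E × F) ≃L[ℝ] E × F :=
    (LinearEquiv.ofInjectiveEndo _ hG'_inj).toContinuousLinearEquiv
  obtain ⟨e, heG, hxe, heU, he'⟩ := exists_openPartialHomeomorph_of_contDiffOn (f' := G'equiv)
    (by simp) (hU.prod isOpen_univ) hG ⟨hxU, mem_univ _⟩ hG'
  exact .of_openPartialHomeomorph e (fun q _ => by rw [heG]) he'
    (fun q hq => by simpa using hMh q.1 (heU hq).1) hxe ⟨hx, mem_univ _⟩

theorem IsSubmanifoldOfDim.exists_ball_tubularMap (hM : IsSubmanifoldOfDim k M)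
    (hMc : IsCompact M) (hdim : Module.finrank ℝ F + k = Module.finrank ℝ E)
    (hA : ContDiff ℝ ∞ A) (hA_inj : ∀ x ∈ M, Injective (A x))
    (hA_trans : ∀ x ∈ M, Disjoint (tangentSpaceOf M x) (A x).range) :
    ∃ ε > 0, InjOn (tubularMap A) (M ×ˢ Metric.ball 0 ε) ∧ ∀ p ∈ M ×ˢ Metric.ball (0 : F) ε,
      HasSmoothLocalInverseWithinAt (tubularMap A) (M ×ˢ Metric.ball 0 ε) p := by
  have hzero_inj : InjOn (tubularMap A) (M ×ˢ {0}) := by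
    rintro ⟨x, _⟩ ⟨-, rfl⟩ ⟨y, _⟩ ⟨-, rfl⟩ hxy
    simpa only [tubularMap_zero, Prod.mk.injEq, and_true] using hxy
  obtain ⟨O, hO, hMO, hinj, hloc⟩ := HasSmoothLocalInverseWithinAt.exists_isOpen_superset
    (contDiff_tubularMap hA).continuous.continuousOn (hMc.prod isCompact_singleton)
    (prod_mono_right (subset_univ {(0 : F)})) hzero_inj (by
      rintro ⟨x, _⟩ ⟨hx, rfl⟩
      exact hM.hasSmoothLocalInverseWithinAt_tubularMap hdim hA hx (hA_inj x hx) (hA_trans x hx))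
  obtain ⟨u, v, -, hv, hMu, h0v, huv⟩ := generalized_tube_lemma hMc isCompact_singleton hO hMO
  obtain ⟨ε, hε, hεv⟩ := Metric.isOpen_iff.1 hv 0 (h0v rfl)
  have hball : M ×ˢ Metric.ball 0 ε ⊆ M ×ˢ univ ∩ O := fun p hp =>
    ⟨⟨hp.1, mem_univ _⟩, huv ⟨hMu hp.1, hεv hp.2⟩⟩
  refine ⟨ε, hε, hinj.mono hball, fun p hp => ?_⟩
  have := (hloc p (hball hp)).inter (isOpen_univ.prod Metric.isOpen_ball) (hball hp).1
    ⟨mem_univ _, hp.2⟩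
  rwa [prod_inter_prod, inter_univ, univ_inter] at this

end TubularMap

section Frame

variable {E ι : Type*} [NormedAddCommGroup E] [NormedSpace ℝ E] [Fintype ι]

/-- The linear map `v ↦ ∑ i, v i • ν i x` sending the standard basis to the frame `ν` at `x`. -/
def frameMap (ν : ι → E → E) (x : E) : EuclideanSpace ℝ ι →L[ℝ] E :=
  ∑ i, (EuclideanSpace.proj i).smulRight (ν i x)

variable {ν : ι → E → E}

theorem frameMap_apply (x : E) (v : EuclideanSpace ℝ ι) :
    frameMap ν x v = ∑ i, v i • ν i x := by
  simp [frameMap]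

theorem frameMap_single [DecidableEq ι] (x : E) (i : ι) :
    frameMap ν x (EuclideanSpace.single i 1) = ν i x := by
  simp [frameMap_apply]

theorem contDiffOn_frameMap {n : WithTop ℕ∞} {s : Set E} (hν : ∀ i, ContDiffOn ℝ n (ν i) s) :
    ContDiffOn ℝ n (frameMap ν) s :=
  ContDiffOn.sum fun i _ => contDiffOn_const.smulRight (hν i)

theorem injective_frameMap {x : E} (hν : LinearIndependent ℝ fun i => ν i x) :
    Injective (frameMap ν x) := by
  rw [injective_iff_map_eq_zero]
  intro v hv
  rw [frameMap_apply] at hv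
  ext i
  exact Fintype.linearIndependent_iff.1 hν v hv i

theorem range_frameMap_le {x : E} {N : Submodule ℝ E} (hν : ∀ i, ν i x ∈ N) :
    (frameMap ν x).range ≤ N := by
  rintro _ ⟨v, rfl⟩
  exact frameMap_apply x v ▸ N.sum_mem fun i _ => N.smul_mem (v i) (hν i)

end Frame

theorem product_neighborhood_general {E F : Type*} [NormedAddCommGroup E] [NormedSpace ℝ E]
    [FiniteDimensional ℝ E] [NormedAddCommGroup F] [InnerProductSpace ℝ F] [FiniteDimensional ℝ F]
    {k : ℕ} {M : Set E} (hMc : IsCompact M) (hM : IsSubmanifoldOfDim k M)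
    (hdim : Module.finrank ℝ F + k = Module.finrank ℝ E)
    {A : E → F →L[ℝ] E} (hA : ContDiffOn ℝ ∞ A M) (hA_inj : ∀ x ∈ M, Injective (A x))
    (hA_trans : ∀ x ∈ M, Disjoint (tangentSpaceOf M x) (A x).range) :
    ∃ Φ : PartialEquiv (E × F) E, Φ.source = M ×ˢ univ ∧ IsOpen Φ.target ∧ ContDiff ℝ ∞ Φ ∧
      ContDiffOn ℝ ∞ Φ.symm Φ.target ∧ ∀ x ∈ M, Φ (x, 0) = x ∧
        HasFDerivAt Φ ((ContinuousLinearMap.id ℝ E).coprod (A x)) (x, 0) := by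
  obtain ⟨B, hB, hBA⟩ := hM.exists_contDiff_extension hMc.isClosed (n := ⊤) hA
  obtain ⟨ε, hε, hinj, hloc⟩ := hM.exists_ball_tubularMap hMc hdim hB
    (fun x hx => hBA hx ▸ hA_inj x hx) (fun x hx => hBA hx ▸ hA_trans x hx)
  obtain ⟨σ, hσ_source, hσ_target, hσ, hσ', hσ0, hdσ⟩ :=
    exists_openPartialHomeomorph_univ_ball (F := F) hε
  let rescale : PartialEquiv (E × F) (E × F) := (PartialEquiv.ofSet M).prod σ.toPartialEquiv
  let tube : PartialEquiv (E × F) E := hinj.toPartialEquiv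
  have htarget : rescale.target = tube.source := congrArg (M ×ˢ ·) hσ_target
  have htube' : ContDiffOn ℝ ∞ tube.symm tube.target :=
    HasSmoothLocalInverseWithinAt.contDiffOn_invFunOn hloc hinj
  refine ⟨rescale.trans' tube htarget, congrArg (M ×ˢ ·) hσ_source,
    HasSmoothLocalInverseWithinAt.isOpen_image hloc,
    (contDiff_tubularMap hB).comp (contDiff_fst.prodMk (hσ.comp contDiff_snd)),
    (contDiff_fst.comp_contDiffOn htube').prodMk (hσ'.comp (contDiff_snd.comp_contDiffOn htube')
      fun u hu => (htarget ▸ tube.map_target hu).2), fun x hx => ⟨?_, ?_⟩⟩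
  · exact (congrArg (fun v => tubularMap B (x, v)) hσ0).trans (tubularMap_zero B x)
  · have hdB : HasFDerivAt (tubularMap B) ((ContinuousLinearMap.id ℝ E).coprod (B x)) (x, σ 0) :=
      hσ0.symm ▸ hasFDerivAt_tubularMap_zero (hB.differentiable (by simp) x)
    rw [← hBA hx]
    exact hdB.comp (x, (0 : F)) ((hasFDerivAt_id x).prodMap (x, (0 : F)) hdσ)

/-- **Product Neighborhood Theorem.** Let `(M, ν)` be a closed `k`-dimensional framed
submanifold of `ℝ^{n+k}` (`ν` smoothly assigns to each `x ∈ M` a basis of the normal space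
`(T_xM)ᗮ`). Then there are an open neighborhood `U` of `M` and a diffeomorphism
`Φ : M × ℝ^n → U` sending each `(x,0)` to `x` whose differential at `(x,0)` carries the
standard basis of `ℝ^n` to the frame `ν(x)`. -/
theorem product_neighborhood (n k : ℕ) (M : Set (Euc (n + k)))
    (hMc : IsCompact M) (hM : IsSubmanifoldOfDim k M)
    (ν : Fin n → Euc (n + k) → Euc (n + k))
    (hν_smooth : ∀ i, ContDiffOn ℝ (⊤ : ℕ∞) (ν i) M)
    (hν_normal : ∀ x ∈ M, ∀ i, ν i x ∈ (tangentSpaceOf M x)ᗮ)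
    (hν_indep : ∀ x ∈ M, LinearIndependent ℝ fun i => ν i x)
    (hν_span : ∀ x ∈ M,
      Submodule.span ℝ (Set.range fun i => ν i x) = (tangentSpaceOf M x)ᗮ) :
    ∃ (U : Set (Euc (n + k))) (Φ : Euc (n + k) × Euc n → Euc (n + k))
      (Ψ : Euc (n + k) → Euc (n + k) × Euc n) (W : Set (Euc (n + k) × Euc n)),
      IsOpen U ∧ M ⊆ U ∧
      IsOpen W ∧ M ×ˢ (univ : Set (Euc n)) ⊆ W ∧ ContDiffOn ℝ (⊤ : ℕ∞) Φ W ∧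
      -- Φ is a diffeomorphism from M × ℝⁿ onto U, with smooth inverse Ψ
      BijOn Φ (M ×ˢ (univ : Set (Euc n))) U ∧
      ContDiffOn ℝ (⊤ : ℕ∞) Ψ U ∧
      (∀ p ∈ M ×ˢ (univ : Set (Euc n)), Ψ (Φ p) = p) ∧
      (∀ u ∈ U, Ψ u ∈ M ×ˢ (univ : Set (Euc n)) ∧ Φ (Ψ u) = u) ∧
      -- (x, 0) is sent to x
      (∀ x ∈ M, Φ (x, 0) = x) ∧
      -- the differential at (x,0) carries the standard basis of ℝⁿ to the frame ν(x)
      (∀ x ∈ M, ∀ i : Fin n,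
        fderiv ℝ Φ (x, 0) (0, EuclideanSpace.single i (1:ℝ)) = ν i x) := by
  obtain ⟨Φ, hsource, hU, hΦ, hΨ, hzero⟩ := product_neighborhood_general hMc hM (by simp)
    (contDiffOn_frameMap hν_smooth) (fun x hx => injective_frameMap (hν_indep x hx))
    fun x hx => (tangentSpaceOf M x).orthogonal_disjoint.mono_right
      (range_frameMap_le (hν_normal x hx))
  refine ⟨Φ.target, Φ, Φ.symm, univ, hU, fun x hx => ?_, isOpen_univ, subset_univ _,
    hΦ.contDiffOn, hsource ▸ Φ.bijOn, hΨ, fun p hp => Φ.left_inv (hsource ▸ hp),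
    fun u hu => ⟨hsource ▸ Φ.map_target hu, Φ.right_inv hu⟩, fun x hx => (hzero x hx).1,
    fun x hx i => ?_⟩
  · exact (hzero x hx).1 ▸ Φ.map_source (hsource ▸ ⟨hx, mem_univ _⟩)
  · simp [(hzero x hx).2.fderiv, frameMap_single]
end
end
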